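/- arXiv:1103.0203 — 2 statements merged into one kernel-verified Lean document; each statement's English description precedes it below -/
import Mathlib

section
/- Let m ≥ 2 and 3s ≤ (m+4)(m+3)(m+1)/2 − m²/2 − m/2 − 8, or m = 1 and s ≤ 5. For a general tuple of nonzero vectors v_1,…,v_s ∈ ℂ⁴, let W = {M ∈ Hom(S^mℂ⁴, Λ²ℂ⁴) : M(v_i^m) ∧ v_i = 0 in Λ³ℂ⁴ for all i = 1,…,s}. Then a nonzero v ∈ ℂ⁴ satisfies M(v^m) ∧ v = 0 in Λ³ℂ⁴ for every M ∈ W if and only if v is a scalar multiple of some v_i. -/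
open MvPolynomial ExteriorAlgebra

/-- The basis wedge `e_S = e_{j_1} ∧ ⋯ ∧ e_{j_b}` (indices of `S` in increasing order),
as an element of the exterior algebra of `ℂ^k`. -/
noncomputable def eWedge (k : ℕ) (S : Finset (Fin k)) : ExteriorAlgebra ℂ (Fin k → ℂ) :=
  ((S.sort (· ≤ ·)).map fun j => ExteriorAlgebra.ι ℂ (Pi.single j (1:ℂ))).prod

/-- The value `M(v^m) ∈ Λ^b ℂ^k` of the tensor `M ∈ Hom(S^m ℂ^k, Λ^b ℂ^k)` represented by
the family of polynomials `q = (q_S)_{|S| = b}`, namely `Σ_S q_S(v) · e_S`. -/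
noncomputable def tval (k b : ℕ)
    (q : {S : Finset (Fin k) // S.card = b} → MvPolynomial (Fin k) ℂ)
    (v : Fin k → ℂ) : ExteriorAlgebra ℂ (Fin k → ℂ) :=
  ∑ S : {S : Finset (Fin k) // S.card = b}, MvPolynomial.eval v (q S) • eWedge k S.1

/-- Surjectivity of a linear map depending polynomially on parameters is an open condition. -/
theorem exists_eval_ne_zero_and_surjective {σ κ E : Type*} [Fintype κ] [DecidableEq κ]
    [AddCommGroup E] [Module ℂ E] (L : (σ → ℂ) → E →ₗ[ℂ] (κ → ℂ))
    (hL : ∀ x c, ∃ p : MvPolynomial σ ℂ, ∀ t, eval t p = L t x c)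
    (t₀ : σ → ℂ) (h₀ : Function.Surjective (L t₀)) :
    ∃ D : MvPolynomial σ ℂ, eval t₀ D ≠ 0 ∧
      ∀ t, eval t D ≠ 0 → Function.Surjective (L t) := by
  choose p hp using hL
  choose x hx using fun c : κ => h₀ (Pi.single c 1)
  let M : Matrix κ κ (MvPolynomial σ ℂ) := Matrix.of fun a b => p (x b) a
  have hM : ∀ t, (eval t).mapMatrix M = Matrix.of fun a b => L t (x b) a := by
    intro t
    ext a b
    simp [M, hp]
  refine ⟨M.det, ?_, ?_⟩
  · rw [RingHom.map_det, hM]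
    have : (Matrix.of fun a b => L t₀ (x b) a) = (1 : Matrix κ κ ℂ) := by
      ext a b
      simp [hx, Matrix.one_apply, Pi.single_apply]
    simp [this]
  · intro t ht y
    rw [RingHom.map_det, hM] at ht
    set A : Matrix κ κ ℂ := Matrix.of fun a b => L t (x b) a with hA
    have hu : IsUnit A.det := isUnit_iff_ne_zero.mpr ht
    refine ⟨∑ b, (A⁻¹.mulVec y) b • x b, ?_⟩
    have h1 : A.mulVec (A⁻¹.mulVec y) = y := by
      rw [Matrix.mulVec_mulVec, Matrix.mul_nonsing_inv _ hu, Matrix.one_mulVec]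
    ext a
    conv_rhs => rw [← h1]
    simp [Matrix.mulVec, dotProduct, hA, mul_comm]

/-- Tuples `F = A x` of forms of degree `m + 1`, where `A` is a skew-symmetric matrix of forms of
degree `m`. -/
noncomputable def koszulSections (N m : ℕ) : Submodule ℂ (Fin N → MvPolynomial (Fin N) ℂ) where
  carrier := {F | ∃ A : Fin N → Fin N → MvPolynomial (Fin N) ℂ,
    (∀ i j, (A i j).IsHomogeneous m) ∧ (∀ i j, A j i = -A i j) ∧ ∀ i, F i = ∑ j, A i j * X j}
  add_mem' := by
    rintro F G ⟨A, hA, hA', hF⟩ ⟨B, hB, hB', hG⟩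
    refine ⟨fun i j => A i j + B i j, fun i j => (hA i j).add (hB i j), fun i j => ?_, fun i => ?_⟩
    · change A j i + B j i = -(A i j + B i j)
      rw [hA' i j, hB' i j, neg_add]
    · simp [hF, hG, add_mul, Finset.sum_add_distrib]
  zero_mem' := ⟨fun _ _ => 0, fun _ _ => isHomogeneous_zero _ _ _, by simp, by simp⟩
  smul_mem' := by
    rintro c F ⟨A, hA, hA', hF⟩
    refine ⟨fun i j => C c * A i j, fun i j => (hA i j).C_mul c, fun i j => ?_, fun i => ?_⟩
    · change C c * A j i = -(C c * A i j)
      rw [hA' i j, mul_neg]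
    · simp [hF, MvPolynomial.smul_eq_C_mul, Finset.mul_sum, mul_assoc]

theorem isHomogeneous_of_mem_koszulSections {N m : ℕ} {F : Fin N → MvPolynomial (Fin N) ℂ}
    (hF : F ∈ koszulSections N m) (i : Fin N) : (F i).IsHomogeneous (m + 1) := by
  obtain ⟨A, hA, -, h⟩ := hF
  rw [h]
  exact IsHomogeneous.sum _ _ _ fun j _ => (hA i j).mul (isHomogeneous_X _ _)

theorem sum_mul_eval_of_mem_koszulSections {N m : ℕ} {F : Fin N → MvPolynomial (Fin N) ℂ}
    (hF : F ∈ koszulSections N m) (x : Fin N → ℂ) : ∑ i, eval x (F i) * x i = 0 := by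
  obtain ⟨A, -, hA', h⟩ := hF
  have h1 : ∑ i, eval x (F i) * x i = ∑ i, ∑ j, eval x (A i j) * x j * x i := by
    simp [h, Finset.sum_mul]
  have h2 : ∑ i, ∑ j, eval x (A i j) * x j * x i = -∑ i, ∑ j, eval x (A i j) * x j * x i := by
    conv_lhs => rw [Finset.sum_comm]
    rw [← Finset.sum_neg_distrib]
    refine Finset.sum_congr rfl fun i _ => ?_
    rw [← Finset.sum_neg_distrib]
    refine Finset.sum_congr rfl fun j _ => ?_
    rw [hA' i j]
    simp only [map_neg]
    ring
  rw [h1]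
  exact self_eq_neg.mp h2

/-- The Koszul sections vanishing at all the points `v i`. -/
noncomputable def vanishingSections {ι : Type*} {N : ℕ} (m : ℕ) (v : ι → Fin N → ℂ) :
    Submodule ℂ (Fin N → MvPolynomial (Fin N) ℂ) where
  carrier := {F | F ∈ koszulSections N m ∧ ∀ i j, eval (v i) (F j) = 0}
  add_mem' := fun hF hG => ⟨add_mem hF.1 hG.1, fun i j => by simp [hF.2 i j, hG.2 i j]⟩
  zero_mem' := ⟨zero_mem _, by simp⟩
  smul_mem' := fun c F hF => ⟨Submodule.smul_mem _ c hF.1, fun i j => by simp [hF.2 i j]⟩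

/-- The forms of degree `k + m + 1` in the ideal generated by the components of the sections
vanishing at the points `v i`. -/
noncomputable def productSpan {ι : Type*} {N : ℕ} (m k : ℕ) (v : ι → Fin N → ℂ) :
    Submodule ℂ (MvPolynomial (Fin N) ℂ) :=
  Submodule.span ℂ {Q | ∃ p : MvPolynomial (Fin N) ℂ, p.IsHomogeneous k ∧
    ∃ F ∈ vanishingSections m v, ∃ j, Q = p * F j}

theorem mul_mem_productSpan {ι : Type*} {N m k : ℕ} {v : ι → Fin N → ℂ}
    {p : MvPolynomial (Fin N) ℂ} (hp : p.IsHomogeneous k) {F : Fin N → MvPolynomial (Fin N) ℂ}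
    (hF : F ∈ vanishingSections m v) (j : Fin N) : p * F j ∈ productSpan m k v :=
  Submodule.subset_span ⟨p, hp, F, hF, j, rfl⟩

theorem isHomogeneous_of_mem_productSpan {ι : Type*} {N m k : ℕ} {v : ι → Fin N → ℂ}
    {Q : MvPolynomial (Fin N) ℂ} (hQ : Q ∈ productSpan m k v) : Q.IsHomogeneous (k + m + 1) := by
  refine (Submodule.span_le (p := homogeneousSubmodule (Fin N) ℂ (k + m + 1))).mpr ?_ hQ
  rintro _ ⟨p, hp, F, hF, j, rfl⟩
  exact hp.mul (isHomogeneous_of_mem_koszulSections hF.1 j)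

theorem eval_eq_zero_of_mem_productSpan {ι : Type*} {N m k : ℕ} {v : ι → Fin N → ℂ}
    {Q : MvPolynomial (Fin N) ℂ} (hQ : Q ∈ productSpan m k v) (i : ι) : eval (v i) Q = 0 := by
  refine Submodule.span_induction ?_ ?_ ?_ ?_ hQ
  · rintro _ ⟨p, hp, F, hF, j, rfl⟩
    simp [hF.2]
  · simp
  · intro x y _ _ hx hy
    simp [hx, hy]
  · intro c x _ hx
    simp [hx]

theorem exists_sum_of_mem_productSpan {ι : Type*} {N m k : ℕ} {v : ι → Fin N → ℂ}
    {Q : MvPolynomial (Fin N) ℂ} (hQ : Q ∈ productSpan m k v) :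
    ∃ F : (Finset.univ : Finset (Fin N)).finsuppAntidiag k × Fin N →
        Fin N → MvPolynomial (Fin N) ℂ,
      (∀ b, F b ∈ vanishingSections m v) ∧
        Q = ∑ b, monomial (b.1 : Fin N →₀ ℕ) (1 : ℂ) * F b b.2 := by
  classical
  refine Submodule.span_induction ?_ ?_ ?_ ?_ hQ
  · rintro _ ⟨p, hp, F, hF, j, rfl⟩
    refine ⟨fun b => if b.2 = j then coeff (b.1 : Fin N →₀ ℕ) p • F else 0, fun b => ?_, ?_⟩
    · beta_reduce
      split_ifs
      · exact Submodule.smul_mem _ _ hF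
      · exact zero_mem _
    · have hpsum : p = ∑ e : (Finset.univ : Finset (Fin N)).finsuppAntidiag k,
          monomial (e : Fin N →₀ ℕ) (coeff (e : Fin N →₀ ℕ) p) := by
        rw [Finset.sum_coe_sort _ fun e : Fin N →₀ ℕ => monomial e (coeff e p)]
        conv_lhs => rw [p.as_sum]
        refine Finset.sum_subset ?_ ?_
        · intro e he
          rw [Finset.mem_finsuppAntidiag]
          refine ⟨?_, Finset.subset_univ _⟩
          by_contra hne
          refine mem_support_iff.mp he (hp.coeff_eq_zero ?_)
          rwa [Finsupp.degree_eq_sum]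
        · intro e _ he
          simp [notMem_support_iff.mp he]
      rw [Fintype.sum_prod_type]
      conv_lhs => rw [hpsum, Finset.sum_mul]
      refine Finset.sum_congr rfl fun e _ => ?_
      rw [Finset.sum_eq_single j]
      · simp only [if_true, Pi.smul_apply, smul_eq_C_mul]
        rw [← mul_assoc, mul_comm (monomial _ _) (C _), C_mul_monomial, mul_one]
      · intro l _ hl
        simp [hl]
      · simp
  · exact ⟨fun _ => 0, fun _ => zero_mem _, by simp⟩
  · rintro x y _ _ ⟨F, hF, rfl⟩ ⟨G, hG, rfl⟩
    exact ⟨fun b => F b + G b, fun b => add_mem (hF b) (hG b), by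
      simp [mul_add, Finset.sum_add_distrib]⟩
  · rintro c x _ ⟨F, hF, rfl⟩
    exact ⟨fun b => c • F b, fun b => Submodule.smul_mem _ _ (hF b), by simp [Finset.smul_sum]⟩

/-- The points `v i` impose independent conditions on Koszul sections, and the components of the
sections vanishing there generate all forms of degree `k + m + 1` vanishing there. -/
structure IsGoodConfig {ι : Type*} {N : ℕ} (m k : ℕ) (v : ι → Fin N → ℂ) : Prop where
  interp : ∀ w : ι → Fin N → ℂ, (∀ i, ∑ j, w i j * v i j = 0) →
    ∃ F ∈ koszulSections N m, ∀ i j, eval (v i) (F j) = w i j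
  gen : ∀ P : MvPolynomial (Fin N) ℂ, P.IsHomogeneous (k + m + 1) →
    (∀ i, eval (v i) P = 0) → P ∈ productSpan m k v

theorem eq_of_sum_mul_eq_of_forall_ne {N : ℕ} {a b v : Fin N → ℂ} {j : Fin N} (hj : v j ≠ 0)
    (h : ∑ l, a l * v l = ∑ l, b l * v l) (hab : ∀ l, l ≠ j → a l = b l) (l : Fin N) :
    a l = b l := by
  by_cases hl : l = j
  · subst hl
    rw [← Finset.add_sum_erase _ _ (Finset.mem_univ l),
      ← Finset.add_sum_erase (a := l) _ (fun l => b l * v l) (Finset.mem_univ l),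
      Finset.sum_congr rfl (g := fun l => b l * v l) fun x hx => by
        rw [hab x (Finset.ne_of_mem_erase hx)]] at h
    exact mul_right_cancel₀ hj (add_right_cancel h)
  · exact hab l hl

theorem IsGoodConfig.ne_zero {ι : Type*} {N m k : ℕ} {v : ι → Fin N → ℂ}
    (h : IsGoodConfig m k v) (hN : 2 ≤ N) (i : ι) : v i ≠ 0 := by
  classical
  intro hi
  obtain ⟨F, hF, hFv⟩ := h.interp (fun l => if l = i then Pi.single ⟨0, by omega⟩ 1 else 0) (by
    intro l
    split_ifs with hl
    · simp [hl, hi]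
    · simp)
  have h1 := hFv i ⟨0, by omega⟩
  rw [hi] at h1
  have h2 := (isHomogeneous_of_mem_koszulSections hF ⟨0, by omega⟩).coeff_eq_zero
    (d := 0) (by simp)
  simp only [if_true, Pi.single_eq_same] at h1
  rw [eval_zero, constantCoeff_eq, h2] at h1
  exact zero_ne_one h1

theorem IsGoodConfig.exists_section {ι : Type*} {N m k : ℕ} {v : ι → Fin N → ℂ}
    (h : IsGoodConfig m k v) (hN : 2 ≤ N) (i : ι) :
    ∃ F ∈ koszulSections N m, (∀ l, l ≠ i → ∀ j, eval (v l) (F j) = 0) ∧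
      ∃ (a : Fin N) (p : MvPolynomial (Fin N) ℂ), p.IsHomogeneous k ∧
        eval (v i) (p * F a) = 1 := by
  classical
  obtain ⟨j, hj⟩ := Function.ne_iff.mp (h.ne_zero hN i)
  rw [Pi.zero_apply] at hj
  have : Nontrivial (Fin N) := Fin.nontrivial_iff_two_le.mpr hN
  obtain ⟨a, ha⟩ := exists_ne j
  obtain ⟨F, hF, hFv⟩ := h.interp
    (fun l => if l = i then Pi.single a (v i j) - Pi.single j (v i a) else 0) (by
    intro l
    split_ifs with hl
    · simp only [hl, Pi.sub_apply, sub_mul, Finset.sum_sub_distrib, Pi.single_apply, ite_mul,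
        zero_mul, Finset.sum_ite_eq', Finset.mem_univ, if_true]
      ring
    · simp)
  refine ⟨F, hF, fun l hl b => by simp [hFv, hl], a, C ((v i j) ^ (k + 1))⁻¹ * X j ^ k, ?_, ?_⟩
  · exact (isHomogeneous_X_pow _ _).C_mul _
  · simp only [map_mul, eval_C, map_pow, eval_X, hFv, if_true, Pi.sub_apply, Pi.single_eq_same,
      Pi.single_eq_of_ne ha, sub_zero]
    field_simp
    ring

theorem IsGoodConfig.comp {ι ι' : Type*} [Fintype ι] {N m k : ℕ} {v : ι → Fin N → ℂ}
    (h : IsGoodConfig m k v) (hN : 2 ≤ N) {f : ι' → ι} (hf : Function.Injective f) :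
    IsGoodConfig m k (v ∘ f) := by
  classical
  refine ⟨fun w hw => ?_, fun P hP hPv => ?_⟩
  · obtain ⟨F, hF, hFv⟩ := h.interp (Function.extend f w 0) (by
      intro l
      by_cases hl : ∃ i, f i = l
      · obtain ⟨i, rfl⟩ := hl
        rw [hf.extend_apply]
        exact hw i
      · rw [Function.extend_apply' _ _ _ hl]
        simp)
    exact ⟨F, hF, fun i j => by rw [Function.comp_apply, hFv, hf.extend_apply]⟩
  · choose F hF hF0 a p hp hFp using h.exists_section hN
    have hmem : ∀ i, i ∉ Set.range f → p i * F i (a i) ∈ productSpan m k (v ∘ f) := fun i hi =>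
      mul_mem_productSpan (hp i) ⟨hF i, fun l j => hF0 i (f l) (fun e => hi ⟨l, e⟩) j⟩ (a i)
    have hmono : productSpan m k v ≤ productSpan m k (v ∘ f) := by
      refine Submodule.span_mono ?_
      rintro _ ⟨p, hp, F, hF, j, rfl⟩
      exact ⟨p, hp, F, ⟨hF.1, fun i j => hF.2 (f i) j⟩, j, rfl⟩
    set S : MvPolynomial (Fin N) ℂ :=
      ∑ i, if i ∈ Set.range f then 0 else eval (v i) P • (p i * F i (a i)) with hS
    have hSmem : S ∈ productSpan m k (v ∘ f) := by
      refine Submodule.sum_mem _ fun i _ => ?_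
      split_ifs with hi
      · exact zero_mem _
      · exact Submodule.smul_mem _ _ (hmem i hi)
    have hdiff : P - S ∈ productSpan m k v := by
      refine h.gen _ (hP.sub (isHomogeneous_of_mem_productSpan hSmem)) fun l => ?_
      by_cases hl : l ∈ Set.range f
      · obtain ⟨i, rfl⟩ := hl
        change eval ((v ∘ f) i) (P - S) = 0
        rw [map_sub, eval_eq_zero_of_mem_productSpan hSmem i, sub_zero, hPv]
      · rw [map_sub, hS, map_sum, Finset.sum_eq_single l]
        · rw [if_neg hl, smul_eval, hFp, mul_one, sub_self]
        · intro i _ hil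
          split_ifs
          · simp
          · simp [hF0 i l hil.symm]
        · simp
    have := add_mem (hmono hdiff) hSmem
    rwa [sub_add_cancel] at this

set_option maxHeartbeats 400000 in
theorem IsGoodConfig.exists_open {ι : Type*} [Fintype ι] {N m k : ℕ} {v₀ : ι → Fin N → ℂ}
    (h : IsGoodConfig m k v₀) (hN : 2 ≤ N) :
    ∃ D : MvPolynomial (ι × Fin N) ℂ, eval (fun t => v₀ t.1 t.2) D ≠ 0 ∧
      ∀ v : ι → Fin N → ℂ, eval (fun t => v t.1 t.2) D ≠ 0 → IsGoodConfig m k v := by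
  classical
  choose F₀ hF₀ hF₀0 a p hp hFp using h.exists_section hN
  have hne := h.ne_zero hN
  choose j hj using fun i => Function.ne_iff.mp (hne i)
  simp only [Pi.zero_apply] at hj
  set P : ι → MvPolynomial (Fin N) ℂ := fun i => p i * F₀ i (a i) with hP
  have hPhom : ∀ i, (P i).IsHomogeneous (k + m + 1) := fun i =>
    (hp i).mul (isHomogeneous_of_mem_koszulSections (hF₀ i) (a i))
  have hP1 : ∀ i l, eval (v₀ l) (P i) = if l = i then 1 else 0 := by
    intro i l
    split_ifs with hl
    · rw [hl]; exact hFp i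
    · simp [hP, hF₀0 i l hl]
  -- evaluation of sections
  let L₁ : (ι × Fin N → ℂ) → koszulSections N m →ₗ[ℂ] ((Σ i, {l // l ≠ j i}) → ℂ) := fun t =>
    { toFun := fun F c => eval (fun l => t (c.1, l)) (F.1 c.2.1)
      map_add' := fun F G => by ext c; simp
      map_smul' := fun r F => by ext c; simp }
  obtain ⟨D₁, hD₁, hD₁'⟩ := exists_eval_ne_zero_and_surjective L₁ (fun F c =>
    ⟨rename (fun l => (c.1, l)) (F.1 c.2.1), fun t => by
      rw [eval_rename]; rfl⟩) (fun t => v₀ t.1 t.2) (by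
      intro y
      set w : ι → Fin N → ℂ := fun i l => if hl : l = j i then
        -(∑ l : {l // l ≠ j i}, y ⟨i, l⟩ * v₀ i l) / v₀ i (j i) else y ⟨i, l, hl⟩ with hw
      obtain ⟨F, hF, hFv⟩ := h.interp w (by
        intro i
        have h1 : ∀ l : {l // l ≠ j i}, w i l * v₀ i l = y ⟨i, l⟩ * v₀ i l := by
          rintro ⟨l, hl⟩
          simp [hw, hl]
        rw [Fintype.sum_eq_add_sum_subtype_ne _ (j i), Finset.sum_congr rfl fun l _ => h1 l]
        simp only [hw, dif_pos]
        rw [div_mul_cancel₀ _ (hj i)]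
        ring)
      refine ⟨⟨F, hF⟩, ?_⟩
      ext ⟨i, l, hl⟩
      change eval (v₀ i) (F l) = _
      rw [hFv]
      simp [hw, hl])
  let L₃ : (ι × Fin N → ℂ) → (ι → ℂ) →ₗ[ℂ] (ι → ℂ) := fun t =>
    { toFun := fun c l => ∑ i, c i * eval (fun x => t (l, x)) (P i)
      map_add' := fun F G => by ext c; simp [add_mul, Finset.sum_add_distrib]
      map_smul' := fun r F => by ext c; simp [Finset.mul_sum, mul_assoc] }
  obtain ⟨D₃, hD₃, hD₃'⟩ := exists_eval_ne_zero_and_surjective L₃ (fun c l =>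
    ⟨∑ i, C (c i) * rename (fun x => (l, x)) (P i), fun t => by
      simp only [map_sum, map_mul, eval_C, eval_rename]; rfl⟩) (fun t => v₀ t.1 t.2) (by
      intro y
      refine ⟨y, ?_⟩
      ext l
      change ∑ i, y i * eval (v₀ l) (P i) = y l
      simp [hP1])
  let B := (Finset.univ : Finset (Fin N)).finsuppAntidiag k × Fin N
  let K := (Finset.univ : Finset (Fin N)).finsuppAntidiag (k + m + 1)
  let L₂ : (ι × Fin N → ℂ) → ((B → koszulSections N m) × (ι → ℂ)) →ₗ[ℂ]
      (K ⊕ (B × Σ i, {l // l ≠ j i}) → ℂ) := fun t =>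
    { toFun := fun x => Sum.elim
        (fun e => coeff (e : Fin N →₀ ℕ)
          (∑ b, monomial (b.1 : Fin N →₀ ℕ) (1 : ℂ) * (x.1 b).1 b.2 + ∑ i, C (x.2 i) * P i))
        (fun c => L₁ t (x.1 c.1) c.2)
      map_add' := fun x y => by
        ext (e | c)
        · simp only [Sum.elim_inl, Pi.add_apply, Prod.fst_add, Prod.snd_add, Submodule.coe_add,
            mul_add, Finset.sum_add_distrib, map_add, add_mul, coeff_add]
          ring
        · simp
      map_smul' := fun r x => by
        ext (e | c)
        · simp only [Sum.elim_inl, Pi.smul_apply, Prod.smul_fst, Prod.smul_snd, Submodule.coe_smul,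
            RingHom.id_apply]
          rw [← coeff_smul, smul_add, Finset.smul_sum, Finset.smul_sum]
          simp [smul_eq_C_mul, mul_assoc, mul_left_comm]
        · simp }
  have hkey : ∀ Q : MvPolynomial (Fin N) ℂ, Q.IsHomogeneous (k + m + 1) →
      ∀ Q' : MvPolynomial (Fin N) ℂ, Q'.IsHomogeneous (k + m + 1) →
      (∀ e : K, coeff (e : Fin N →₀ ℕ) Q = coeff (e : Fin N →₀ ℕ) Q') → Q = Q' := by
    intro Q hQ Q' hQ' hc
    ext e
    by_cases he : e.degree = k + m + 1
    · exact hc ⟨e, by rw [Finset.mem_finsuppAntidiag, ← Finsupp.degree_eq_sum]; simp [he]⟩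
    · rw [hQ.coeff_eq_zero he, hQ'.coeff_eq_zero he]
  have hmonhom : ∀ G : B → koszulSections N m,
      (∑ b, monomial (b.1 : Fin N →₀ ℕ) (1 : ℂ) * (G b).1 b.2).IsHomogeneous (k + m + 1) := by
    intro G
    refine IsHomogeneous.sum _ _ _ fun b _ => ?_
    refine (isHomogeneous_monomial (n := k) _ ?_).mul
      (isHomogeneous_of_mem_koszulSections (G b).2 _)
    rw [Finsupp.degree_eq_sum]
    exact (Finset.mem_finsuppAntidiag.mp b.1.2).1
  have hchom : ∀ c : ι → ℂ, (∑ i, C (c i) * P i).IsHomogeneous (k + m + 1) := fun c =>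
    IsHomogeneous.sum _ _ _ fun i _ => (hPhom i).C_mul _
  obtain ⟨D₂, hD₂, hD₂'⟩ := exists_eval_ne_zero_and_surjective L₂ (by
    rintro x (e | c)
    · exact ⟨C (coeff (e : Fin N →₀ ℕ)
          (∑ b, monomial (b.1 : Fin N →₀ ℕ) (1 : ℂ) * (x.1 b).1 b.2 + ∑ i, C (x.2 i) * P i)),
          fun t => by rw [eval_C]; rfl⟩
    · exact ⟨rename (fun l => (c.2.1, l)) ((x.1 c.1).1 c.2.2.1), fun t => by
        rw [eval_rename]; rfl⟩) (fun t => v₀ t.1 t.2) (by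
      intro y
      choose G hG using fun b : B => hD₁' _ hD₁ fun c => y (Sum.inr (b, c))
      set Y : MvPolynomial (Fin N) ℂ := ∑ e : K, monomial (e : Fin N →₀ ℕ) (y (Sum.inl e)) with hY
      have hYhom : Y.IsHomogeneous (k + m + 1) := by
        refine IsHomogeneous.sum _ _ _ fun e _ => isHomogeneous_monomial _ ?_
        rw [Finsupp.degree_eq_sum]
        exact (Finset.mem_finsuppAntidiag.mp e.2).1
      set R : MvPolynomial (Fin N) ℂ :=
        Y - ∑ b, monomial (b.1 : Fin N →₀ ℕ) (1 : ℂ) * (G b).1 b.2 with hR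
      have hRhom : R.IsHomogeneous (k + m + 1) := hYhom.sub (hmonhom G)
      set c : ι → ℂ := fun i => eval (v₀ i) R with hc
      have hmem : R - ∑ i, C (c i) * P i ∈ productSpan m k v₀ := by
        refine h.gen _ (hRhom.sub (hchom c)) fun l => ?_
        simp [hP1, hc]
      obtain ⟨F, hF, hFs⟩ := exists_sum_of_mem_productSpan hmem
      refine ⟨(fun b => G b + ⟨F b, (hF b).1⟩, c), ?_⟩
      ext (e | ⟨b, d⟩)
      · change coeff (e : Fin N →₀ ℕ) (∑ b, monomial (b.1 : Fin N →₀ ℕ) (1 : ℂ) *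
          ((G b).1 b.2 + F b b.2) + ∑ i, C (c i) * P i) = _
        simp only [mul_add, Finset.sum_add_distrib]
        rw [← hFs, hR]
        rw [show ∀ a b c : MvPolynomial (Fin N) ℂ, a + (b - a - c) + c = b by intros; ring, hY,
          coeff_sum, Finset.sum_eq_single e]
        · simp
        · intro e' _ hne
          rw [coeff_monomial, if_neg fun h => hne (Subtype.ext h)]
        · simp
      · change L₁ (fun t => v₀ t.1 t.2) (G b + ⟨F b, (hF b).1⟩) d = y (Sum.inr (b, d))
        rw [map_add, hG]
        change y _ + eval (v₀ d.1) (F b d.2.1) = _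
        rw [(hF b).2, add_zero])
  refine ⟨D₁ * D₂ * D₃ * ∏ i, X (i, j i), ?_, ?_⟩
  · simp only [map_mul, map_prod, eval_X]
    exact mul_ne_zero (mul_ne_zero (mul_ne_zero hD₁ hD₂) hD₃)
      (Finset.prod_ne_zero_iff.mpr fun i _ => hj i)
  · intro v hv
    simp only [map_mul, map_prod, eval_X] at hv
    have hvj : ∀ i, v i (j i) ≠ 0 := fun i =>
      Finset.prod_ne_zero_iff.mp (right_ne_zero_of_mul hv) i (Finset.mem_univ i)
    have hv := left_ne_zero_of_mul hv
    have s₃ := hD₃' _ (right_ne_zero_of_mul hv)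
    have hv := left_ne_zero_of_mul hv
    have s₂ := hD₂' _ (right_ne_zero_of_mul hv)
    have s₁ := hD₁' _ (left_ne_zero_of_mul hv)
    refine ⟨fun w hw => ?_, fun Q hQ hQv => ?_⟩
    · obtain ⟨F, hF⟩ := s₁ fun c => w c.1 c.2.1
      refine ⟨F.1, F.2, fun i => eq_of_sum_mul_eq_of_forall_ne (hvj i) ?_ fun l hl =>
        congrFun hF ⟨i, l, hl⟩⟩
      rw [hw, sum_mul_eval_of_mem_koszulSections F.2]
    · obtain ⟨⟨G, c⟩, hGc⟩ := s₂ (Sum.elim (fun e => coeff (e : Fin N →₀ ℕ) Q) 0)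
      have hGv : ∀ b, (G b).1 ∈ vanishingSections m v := by
        intro b
        refine ⟨(G b).2, fun i => eq_of_sum_mul_eq_of_forall_ne (b := fun _ => 0) (hvj i) ?_
          fun l hl =>
          congrFun hGc (Sum.inr (b, ⟨i, l, hl⟩))⟩
        refine (sum_mul_eval_of_mem_koszulSections (G b).2 _).trans ?_
        simp
      have hQe : Q = ∑ b, monomial (b.1 : Fin N →₀ ℕ) (1 : ℂ) * (G b).1 b.2 +
          ∑ i, C (c i) * P i :=
        hkey _ hQ _ ((hmonhom G).add (hchom c)) fun e => (congrFun hGc (Sum.inl e)).symm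
      have hmem : ∑ b, monomial (b.1 : Fin N →₀ ℕ) (1 : ℂ) * (G b).1 b.2 ∈ productSpan m k v := by
        refine Submodule.sum_mem _ fun b _ => mul_mem_productSpan ?_ (hGv b) b.2
        refine isHomogeneous_monomial _ ?_
        rw [Finsupp.degree_eq_sum]
        exact (Finset.mem_finsuppAntidiag.mp b.1.2).1
      have hc : c = 0 := by
        refine (LinearMap.injective_iff_surjective.mpr s₃) ?_
        rw [map_zero]
        ext l
        change ∑ i, c i * eval (v l) (P i) = 0
        have := hQv l
        rw [hQe, map_add, eval_eq_zero_of_mem_productSpan hmem, zero_add] at this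
        simpa using this
      rw [hQe, hc]
      simpa using hmem

theorem mem_span_X_mul_of_isHomogeneous {σ : Type*} {d : ℕ} {p : MvPolynomial σ ℂ}
    (hp : p.IsHomogeneous (d + 1)) :
    p ∈ Submodule.span ℂ {Q : MvPolynomial σ ℂ |
      ∃ (i : σ) (q : MvPolynomial σ ℂ), q.IsHomogeneous d ∧ Q = X i * q} := by
  classical
  rw [p.as_sum]
  refine Submodule.sum_mem _ fun e he => Submodule.subset_span ?_
  have hdeg : e.degree = d + 1 := by
    by_contra hne
    exact mem_support_iff.mp he (hp.coeff_eq_zero hne)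
  obtain ⟨i, hi⟩ : ∃ i, e i ≠ 0 := by
    by_contra! hall
    rw [show e = 0 from Finsupp.ext hall] at hdeg
    simp at hdeg
  obtain ⟨f, rfl⟩ : ∃ f, e = Finsupp.single i 1 + f :=
    ⟨e - Finsupp.single i 1, (add_tsub_cancel_of_le
      (Finsupp.single_le_iff.mpr (Nat.one_le_iff_ne_zero.mpr hi))).symm⟩
  refine ⟨i, monomial f (coeff (Finsupp.single i 1 + f) p), isHomogeneous_monomial _ ?_, ?_⟩
  · rw [map_add, Finsupp.degree_single] at hdeg
    omega
  · rw [X, monomial_mul, one_mul]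

theorem mem_of_isHomogeneous_of_X_mul {σ : Type*} (S : ℕ → Submodule ℂ (MvPolynomial σ ℂ))
    (h₀ : 1 ∈ S 0) (hX : ∀ d i, ∀ p ∈ S d, X i * p ∈ S (d + 1)) {d : ℕ} :
    ∀ {p : MvPolynomial σ ℂ}, p.IsHomogeneous d → p ∈ S d := by
  induction d with
  | zero =>
    intro p hp
    rw [← totalDegree_zero_iff_isHomogeneous] at hp
    rw [totalDegree_eq_zero_iff_eq_C.mp hp, ← mul_one (C _), ← smul_eq_C_mul]
    exact Submodule.smul_mem _ _ h₀
  | succ d ih =>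
    intro p hp
    refine Submodule.span_le.mpr ?_ (mem_span_X_mul_of_isHomogeneous hp)
    rintro _ ⟨i, q, hq, rfl⟩
    exact hX d i q (ih hq)

/-- The product of the linear forms `X (j + 1) - t X 0` for `t < α j`. -/
noncomputable def latticeForm {N : ℕ} (α : Fin N → ℕ) : MvPolynomial (Fin (N + 1)) ℂ :=
  ∏ j, ∏ t ∈ Finset.range (α j), (X j.succ - C (t : ℂ) * X 0)

/-- The point `(1, α)`. -/
noncomputable def latticePoint {N : ℕ} (α : Fin N → ℕ) : Fin (N + 1) → ℂ :=
  Fin.cons 1 fun j => (α j : ℂ)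

theorem isHomogeneous_X_sub_C_mul_X {N : ℕ} (j : Fin N) (t : ℂ) :
    (X j.succ - C t * X 0 : MvPolynomial (Fin (N + 1)) ℂ).IsHomogeneous 1 :=
  (isHomogeneous_X _ _).sub ((isHomogeneous_X _ _).C_mul _)

theorem isHomogeneous_latticeForm {N : ℕ} (α : Fin N → ℕ) :
    (latticeForm α).IsHomogeneous (∑ j, α j) := by
  refine IsHomogeneous.prod _ _ _ fun j _ => ?_
  have := IsHomogeneous.prod (Finset.range (α j))
    (fun t : ℕ => (X j.succ - C (t : ℂ) * X 0 : MvPolynomial (Fin (N + 1)) ℂ)) (fun _ => 1)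
    fun t _ => isHomogeneous_X_sub_C_mul_X j t
  simpa using this

theorem eval_latticeForm_eq_zero {N : ℕ} {α l : Fin N → ℕ} (h : ¬ α ≤ l) :
    eval (latticePoint l) (latticeForm α) = 0 := by
  obtain ⟨j, hj⟩ := not_forall.mp h
  rw [latticeForm, map_prod]
  refine Finset.prod_eq_zero (Finset.mem_univ j) ?_
  rw [map_prod]
  refine Finset.prod_eq_zero (Finset.mem_range.mpr (not_le.mp hj)) ?_
  simp [latticePoint]

theorem eval_latticeForm_self_ne_zero {N : ℕ} (α : Fin N → ℕ) :
    eval (latticePoint α) (latticeForm α) ≠ 0 := by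
  rw [latticeForm, map_prod]
  refine Finset.prod_ne_zero_iff.mpr fun j _ => ?_
  rw [map_prod]
  refine Finset.prod_ne_zero_iff.mpr fun t ht => ?_
  have := Finset.mem_range.mp ht
  simp only [latticePoint, map_sub, eval_X, Fin.cons_succ, map_mul, eval_C, Fin.cons_zero, mul_one]
  rw [sub_ne_zero]
  exact_mod_cast this.ne'

theorem eval_cons_zero_latticeForm {N : ℕ} (α : Fin N → ℕ) (z : Fin N → ℂ) :
    eval (Fin.cons 0 z) (latticeForm α) = ∏ j, z j ^ α j := by
  simp [latticeForm]

theorem exists_latticeForm_eq_mul {N : ℕ} {α γ : Fin N → ℕ} (h : γ ≤ α) :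
    ∃ r : MvPolynomial (Fin (N + 1)) ℂ, r.IsHomogeneous (∑ j, (α j - γ j)) ∧
      latticeForm α = r * latticeForm γ := by
  refine ⟨∏ j, ∏ t ∈ Finset.Ico (γ j) (α j), (X j.succ - C (t : ℂ) * X 0), ?_, ?_⟩
  · refine IsHomogeneous.prod _ _ _ fun j _ => ?_
    have := IsHomogeneous.prod (Finset.Ico (γ j) (α j))
      (fun t : ℕ => (X j.succ - C (t : ℂ) * X 0 : MvPolynomial (Fin (N + 1)) ℂ)) (fun _ => 1)
      fun t _ => isHomogeneous_X_sub_C_mul_X j t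
    simpa using this
  · rw [latticeForm, latticeForm, ← Finset.prod_mul_distrib]
    refine Finset.prod_congr rfl fun j _ => ?_
    rw [mul_comm, Finset.prod_range_mul_prod_Ico _ (h j)]

theorem X_succ_mul_latticeForm {N : ℕ} (α : Fin N → ℕ) (j : Fin N) :
    X j.succ * latticeForm α =
      latticeForm (α + Pi.single j 1) + C (α j : ℂ) * (X 0 * latticeForm α) := by
  have h : latticeForm (α + Pi.single j 1) =
      latticeForm α * (X j.succ - C (α j : ℂ) * X 0) := by
    rw [latticeForm, latticeForm, ← Finset.mul_prod_erase _ _ (Finset.mem_univ j),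
      ← Finset.mul_prod_erase (a := j) Finset.univ
        (fun j => ∏ t ∈ Finset.range (α j), (X j.succ - C (t : ℂ) * X 0)) (Finset.mem_univ j)]
    rw [Finset.prod_congr rfl (g := fun j => ∏ t ∈ Finset.range (α j),
      (X j.succ - C (t : ℂ) * X 0)) fun i hi => by
        rw [Pi.add_apply, Pi.single_eq_of_ne (Finset.ne_of_mem_erase hi), add_zero]]
    rw [Pi.add_apply, Pi.single_eq_same, Finset.prod_range_succ]
    ring
  rw [h]
  ring

theorem mem_span_latticeForm {N d : ℕ} {P : MvPolynomial (Fin (N + 1)) ℂ}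
    (hP : P.IsHomogeneous d) :
    P ∈ Submodule.span ℂ {Q | ∃ (e : ℕ) (α : Fin N → ℕ), e + ∑ j, α j = d ∧
      Q = X 0 ^ e * latticeForm α} := by
  refine mem_of_isHomogeneous_of_X_mul (fun d => Submodule.span ℂ
    {Q | ∃ (e : ℕ) (α : Fin N → ℕ), e + ∑ j, α j = d ∧ Q = X 0 ^ e * latticeForm α}) ?_ ?_ hP
  · exact Submodule.subset_span ⟨0, 0, by simp, by simp [latticeForm]⟩
  · intro d i p hp
    refine Submodule.span_induction ?_ ?_ ?_ ?_ hp
    · rintro _ ⟨e, α, rfl, rfl⟩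
      refine Fin.cases ?_ (fun j => ?_) i
      · exact Submodule.subset_span ⟨e + 1, α, by ring, by ring⟩
      · rw [mul_left_comm, X_succ_mul_latticeForm, mul_add, mul_left_comm, ← smul_eq_C_mul]
        refine add_mem (Submodule.subset_span ⟨e, _, ?_, rfl⟩)
          (Submodule.smul_mem _ _ (Submodule.subset_span ⟨e + 1, α, by ring, by ring⟩))
        simp [Finset.sum_add_distrib]
        ring
    · simp
    · intro x y _ _ hx hy
      rw [mul_add]
      exact add_mem hx hy
    · intro c x _ hx
      rw [mul_smul_comm]
      exact Submodule.smul_mem _ _ hx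

/-- The exponents of weight at most `m` that are not in `C`. -/
def latticeSet {N : ℕ} (m : ℕ) (C : Set (Fin N → ℕ)) : Set (Fin N → ℕ) :=
  {α | ∑ j, α j ≤ m ∧ α ∉ C}

instance finite_latticeSet {N m : ℕ} (C : Set (Fin N → ℕ)) : Finite (latticeSet m C) := by
  refine Set.Finite.subset (Set.finite_Icc (0 : Fin N → ℕ) fun _ => m) fun α hα => ?_
  exact ⟨zero_le, fun j => (Finset.single_le_sum (fun _ _ => Nat.zero_le _)
    (Finset.mem_univ j)).trans hα.1⟩

noncomputable instance fintype_latticeSet {N m : ℕ} (C : Set (Fin N → ℕ)) :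
    Fintype (latticeSet m C) := Fintype.ofFinite _

theorem eq_zero_of_sum_mul_eval_latticeForm {N m : ℕ} {C : Set (Fin N → ℕ)}
    (c : latticeSet m C → ℂ)
    (h : ∀ l : latticeSet m C, ∑ α, c α * eval (latticePoint l.1) (latticeForm α.1) = 0) :
    c = 0 := by
  by_contra hc
  obtain ⟨a, ha⟩ := Function.ne_iff.mp hc
  obtain ⟨l, hl, hmin⟩ := Set.exists_min_image {a : latticeSet m C | c a ≠ 0}
    (fun a => ∑ j, a.1 j) (Set.toFinite _) ⟨a, ha⟩
  have := h l
  rw [Finset.sum_eq_single l] at this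
  · exact mul_ne_zero hl (eval_latticeForm_self_ne_zero _) this
  · intro α _ hne
    by_cases hα : c α = 0
    · rw [hα, zero_mul]
    rw [eval_latticeForm_eq_zero, mul_zero]
    intro hle
    have hlt : ∑ j, α.1 j < ∑ j, l.1 j := by
      refine Finset.sum_lt_sum (fun j _ => hle j) ?_
      by_contra! hge
      exact hne (Subtype.ext (le_antisymm hle fun j => hge j (Finset.mem_univ j)))
    exact absurd (hmin α hα) (not_le.mpr hlt)
  · simp

theorem exists_isHomogeneous_eval_latticePoint {N m : ℕ} (C : Set (Fin N → ℕ))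
    (t : latticeSet m C → ℂ) :
    ∃ f : MvPolynomial (Fin (N + 1)) ℂ, f.IsHomogeneous m ∧
      ∀ l : latticeSet m C, eval (latticePoint l.1) f = t l := by
  let L : (latticeSet m C → ℂ) →ₗ[ℂ] (latticeSet m C → ℂ) :=
    { toFun := fun c l => ∑ α, c α * eval (latticePoint l.1) (latticeForm α.1)
      map_add' := fun x y => by ext l; simp [add_mul, Finset.sum_add_distrib]
      map_smul' := fun r x => by ext l; simp [Finset.mul_sum, mul_assoc] }
  have hinj : Function.Injective L := by
    rw [← LinearMap.ker_eq_bot, LinearMap.ker_eq_bot']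
    exact fun c hc => eq_zero_of_sum_mul_eval_latticeForm c fun l => congrFun hc l
  obtain ⟨c, hc⟩ := LinearMap.injective_iff_surjective.mp hinj t
  refine ⟨∑ α, MvPolynomial.C (c α) * (X 0 ^ (m - ∑ j, α.1 j) * latticeForm α.1), ?_, fun l => ?_⟩
  · refine IsHomogeneous.sum _ _ _ fun α _ => IsHomogeneous.C_mul ?_ _
    have := (isHomogeneous_X_pow (R := ℂ) (0 : Fin (N + 1)) (m - ∑ j, α.1 j)).mul
      (isHomogeneous_latticeForm α.1)
    rwa [Nat.sub_add_cancel α.2.1] at this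
  · rw [← hc]
    change _ = ∑ α, c α * eval (latticePoint l.1) (latticeForm α.1)
    simp [latticePoint]

/-- `C` consists of exponents of weight `m`, and every exponent of larger weight dominates an
element of `C`. -/
structure IsCovering {N : ℕ} (m : ℕ) (C : Set (Fin N → ℕ)) : Prop where
  sum_eq : ∀ γ ∈ C, ∑ j, γ j = m
  exists_le : ∀ α : Fin N → ℕ, m < ∑ j, α j → ∃ γ ∈ C, γ ≤ α

theorem IsCovering.eval_latticeForm {N m : ℕ} {C : Set (Fin N → ℕ)} (hC : IsCovering m C)
    {γ : Fin N → ℕ} (hγ : γ ∈ C) (l : latticeSet m C) :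
    eval (latticePoint l.1) (latticeForm γ) = 0 := by
  refine eval_latticeForm_eq_zero fun hle => l.2.2 ?_
  have : γ = l.1 := by
    by_contra hne
    have hlt : ∑ j, γ j < ∑ j, l.1 j := by
      refine Finset.sum_lt_sum (fun j _ => hle j) ?_
      by_contra! hge
      exact hne (le_antisymm hle fun j => hge j (Finset.mem_univ j))
    have := hC.sum_eq γ hγ
    have := l.2.1
    omega
  rwa [← this]

theorem IsCovering.mem_span {N m k : ℕ} {C : Set (Fin N → ℕ)} (hC : IsCovering m C)
    {P : MvPolynomial (Fin (N + 1)) ℂ} (hP : P.IsHomogeneous (k + m))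
    (hPv : ∀ l : latticeSet m C, eval (latticePoint l.1) P = 0) :
    P ∈ Submodule.span ℂ {Q : MvPolynomial (Fin (N + 1)) ℂ | ∃ r g : MvPolynomial (Fin (N + 1)) ℂ,
      r.IsHomogeneous k ∧ g.IsHomogeneous m ∧
        (∀ l : latticeSet m C, eval (latticePoint l.1) g = 0) ∧ Q = r * g} := by
  set U := Submodule.span ℂ {Q : MvPolynomial (Fin (N + 1)) ℂ |
    ∃ r g : MvPolynomial (Fin (N + 1)) ℂ, r.IsHomogeneous k ∧ g.IsHomogeneous m ∧
      (∀ l : latticeSet m C, eval (latticePoint l.1) g = 0) ∧ Q = r * g} with hU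
  have hUv : ∀ u ∈ U, ∀ l : latticeSet m C, eval (latticePoint l.1) u = 0 := by
    intro u hu l
    refine Submodule.span_induction ?_ ?_ ?_ ?_ hu
    · rintro _ ⟨r, g, -, -, hg, rfl⟩
      rw [map_mul, hg, mul_zero]
    · simp
    · intro x y _ _ hx hy
      rw [map_add, hx, hy, add_zero]
    · intro c x _ hx
      rw [smul_eval, hx, mul_zero]
  have hdec : ∃ u ∈ U, ∃ c : latticeSet m C → ℂ, P = u +
      ∑ α, MvPolynomial.C (c α) * (X 0 ^ (k + m - ∑ j, α.1 j) * latticeForm α.1) := by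
    classical
    refine Submodule.span_induction ?_ ?_ ?_ ?_ (mem_span_latticeForm hP)
    · rintro _ ⟨e, α, he, rfl⟩
      by_cases hα : α ∈ latticeSet m C
      · refine ⟨0, zero_mem _, Pi.single ⟨α, hα⟩ 1, ?_⟩
        rw [zero_add, Finset.sum_eq_single ⟨α, hα⟩]
        · rw [Pi.single_eq_same, C_1, one_mul, ← he, Nat.add_sub_cancel]
        · intro b _ hb
          rw [Pi.single_eq_of_ne hb, C_0, zero_mul]
        · simp
      · refine ⟨X 0 ^ e * latticeForm α, ?_, 0, by simp⟩
        obtain ⟨γ, hγ, hle⟩ : ∃ γ ∈ C, γ ≤ α := by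
          by_cases hm : m < ∑ j, α j
          · exact hC.exists_le α hm
          · exact ⟨α, by_contra fun h => hα ⟨not_lt.mp hm, h⟩, le_rfl⟩
        obtain ⟨r, hr, hrα⟩ := exists_latticeForm_eq_mul hle
        refine Submodule.subset_span ⟨X 0 ^ e * r, latticeForm γ, ?_, ?_, ?_, ?_⟩
        · have h1 : ∑ j, (α j - γ j) + ∑ j, γ j = ∑ j, α j := by
            rw [← Finset.sum_add_distrib]
            exact Finset.sum_congr rfl fun j _ => Nat.sub_add_cancel (hle j)
          have h2 := hC.sum_eq γ hγ
          have := (isHomogeneous_X_pow (R := ℂ) (0 : Fin (N + 1)) e).mul hr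
          rwa [show e + ∑ j, (α j - γ j) = k by omega] at this
        · rw [← hC.sum_eq γ hγ]
          exact isHomogeneous_latticeForm γ
        · exact hC.eval_latticeForm hγ
        · rw [hrα, mul_assoc]
    · exact ⟨0, zero_mem _, 0, by simp⟩
    · rintro x y _ _ ⟨u, hu, c, rfl⟩ ⟨u', hu', c', rfl⟩
      refine ⟨u + u', add_mem hu hu', c + c', ?_⟩
      simp only [Pi.add_apply, map_add, add_mul, Finset.sum_add_distrib]
      ring
    · rintro a x _ ⟨u, hu, c, rfl⟩
      refine ⟨a • u, Submodule.smul_mem _ _ hu, a • c, ?_⟩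
      simp [smul_eq_C_mul, Finset.mul_sum, mul_assoc]
  obtain ⟨u, hu, c, rfl⟩ := hdec
  have hc : c = 0 := by
    refine eq_zero_of_sum_mul_eval_latticeForm c fun l => ?_
    have := hPv l
    rw [map_add, hUv u hu l, zero_add] at this
    simpa [latticePoint] using this
  simpa [hc] using hu

theorem isGoodConfig_latticePoint_one (m k : ℕ) :
    IsGoodConfig m k (fun l : latticeSet m {γ : Fin 1 → ℕ | ∑ j, γ j = m} => latticePoint l.1) := by
  have hC : IsCovering m {γ : Fin 1 → ℕ | ∑ j, γ j = m} :=
    ⟨fun γ hγ => hγ, fun α hα => ⟨fun _ => m, by simp, fun j => by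
      rw [Subsingleton.elim j 0]
      simp only [Finset.univ_unique, Fin.default_eq_zero, Finset.sum_singleton] at hα
      exact hα.le⟩⟩
  have hsec : ∀ g : MvPolynomial (Fin 2) ℂ, g.IsHomogeneous m →
      ![g * X 1, -g * X 0] ∈ koszulSections 2 m := by
    intro g hg
    refine ⟨![![0, g], ![-g, 0]], ?_, ?_, ?_⟩
    · simp [Fin.forall_fin_two, isHomogeneous_zero, hg, hg.neg]
    · simp [Fin.forall_fin_two]
    · simp [Fin.forall_fin_two]
  refine ⟨fun w hw => ?_, fun P hP hPv => ?_⟩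
  · obtain ⟨g, hg, hgv⟩ := exists_isHomogeneous_eval_latticePoint _ fun l => -w l 1
    refine ⟨_, hsec g hg, fun l => ?_⟩
    have h1 : w l 0 * latticePoint l.1 0 + w l 1 * latticePoint l.1 1 = 0 :=
      (Fin.sum_univ_two fun j => w l j * latticePoint l.1 j).symm.trans (hw l)
    have h0 : latticePoint l.1 0 = 1 := rfl
    rw [h0] at h1
    refine Fin.forall_fin_two.mpr ⟨?_, ?_⟩
    · change eval (latticePoint l.1) (g * X 1) = w l 0
      rw [map_mul, hgv, eval_X]
      linear_combination -h1
    · change eval (latticePoint l.1) (-g * X 0) = w l 1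
      rw [map_mul, map_neg, hgv, eval_X, h0]
      ring
  · have hP' : P.IsHomogeneous (k + 1 + m) := by
      rwa [show k + 1 + m = k + m + 1 by ring]
    refine Submodule.span_le.mpr ?_ (hC.mem_span hP' hPv)
    rintro _ ⟨r, g, hr, hg, hgv, rfl⟩
    have hvan : ![g * X 1, -g * X 0] ∈ vanishingSections m
        (fun l : latticeSet m {γ : Fin 1 → ℕ | ∑ j, γ j = m} => latticePoint l.1) :=
      ⟨hsec g hg, fun l => by simp [Fin.forall_fin_two, hgv]⟩
    change r * g ∈ productSpan m k _
    refine Submodule.span_induction ?_ ?_ ?_ ?_ (mem_span_X_mul_of_isHomogeneous hr)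
    · rintro _ ⟨i, q, hq, rfl⟩
      have h0 := mul_mem_productSpan hq hvan 0
      have h1 := neg_mem (mul_mem_productSpan hq hvan 1)
      simp only [Matrix.cons_val_zero, Matrix.cons_val_one] at h0 h1
      fin_cases i
      · convert h1 using 1
        simp only [Fin.zero_eta]
        ring
      · convert h0 using 1
        simp only [Fin.mk_one]
        ring
    · simp
    · intro x y _ _ hx hy
      rw [add_mul]
      exact add_mem hx hy
    · intro c x _ hx
      rw [smul_mul_assoc]
      exact Submodule.smul_mem _ _ hx

theorem isHomogeneous_of_X_mul {σ : Type*} {d : ℕ} {i : σ} {p : MvPolynomial σ ℂ}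
    (h : (X i * p).IsHomogeneous (d + 1)) : p.IsHomogeneous d := by
  intro e he
  rw [← coeff_X_mul e i] at he
  have := h he
  rw [map_add, Finsupp.weight_single, Pi.one_apply, smul_eq_mul, mul_one] at this
  omega

/-- Restriction of polynomials to the hyperplane `X 0 = 0`. -/
noncomputable def restrictZero (N : ℕ) :
    MvPolynomial (Fin (N + 1)) ℂ →ₐ[ℂ] MvPolynomial (Fin N) ℂ :=
  aeval (Fin.cons 0 X)

theorem restrictZero_rename {N : ℕ} (p : MvPolynomial (Fin N) ℂ) :
    restrictZero N (rename Fin.succ p) = p := by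
  rw [restrictZero, aeval_rename]
  exact aeval_X_left_apply p

theorem restrictZero_X_zero (N : ℕ) : restrictZero N (X 0) = 0 := by
  simp [restrictZero]

theorem eval_restrictZero {N : ℕ} (p : MvPolynomial (Fin (N + 1)) ℂ) (z : Fin N → ℂ) :
    eval z (restrictZero N p) = eval (Fin.cons 0 z) p := by
  induction p using MvPolynomial.induction_on with
  | C a => simp [restrictZero]
  | add p q hp hq => simp [hp, hq]
  | mul_X p i hp =>
    rw [map_mul, map_mul, map_mul, hp, eval_X]
    refine Fin.cases ?_ (fun j => ?_) i <;> simp [restrictZero]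

theorem isHomogeneous_restrictZero {N d : ℕ} {p : MvPolynomial (Fin (N + 1)) ℂ}
    (hp : p.IsHomogeneous d) : (restrictZero N p).IsHomogeneous d := by
  have := hp.aeval (Fin.cons 0 X : Fin (N + 1) → MvPolynomial (Fin N) ℂ) (n := 1) (by
    intro i
    refine Fin.cases ?_ (fun j => ?_) i
    · exact isHomogeneous_zero _ _ _
    · exact isHomogeneous_X _ _)
  rwa [one_mul] at this

theorem exists_eq_rename_restrictZero_add {N : ℕ} (p : MvPolynomial (Fin (N + 1)) ℂ) :
    ∃ q, p = rename Fin.succ (restrictZero N p) + X 0 * q := by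
  induction p using MvPolynomial.induction_on with
  | C a => exact ⟨0, by simp [restrictZero]⟩
  | add p q hp hq =>
    obtain ⟨p', hp⟩ := hp
    obtain ⟨q', hq⟩ := hq
    refine ⟨p' + q', ?_⟩
    rw [map_add, map_add]
    linear_combination hp + hq
  | mul_X p i hp =>
    obtain ⟨p', hp⟩ := hp
    refine Fin.cases ?_ (fun j => ?_) i
    · exact ⟨p, by rw [map_mul, restrictZero_X_zero]; simp [mul_comm]⟩
    · refine ⟨p' * X j.succ, ?_⟩
      have : restrictZero N (X j.succ) = X j := by simp [restrictZero]
      rw [map_mul, map_mul, this, rename_X]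
      linear_combination X j.succ * hp

theorem lift_mem_koszulSections {N m : ℕ} {F : Fin N → MvPolynomial (Fin N) ℂ}
    (hF : F ∈ koszulSections N m) :
    (Fin.cons 0 fun j => rename Fin.succ (F j) : Fin (N + 1) → MvPolynomial (Fin (N + 1)) ℂ) ∈
      koszulSections (N + 1) m := by
  obtain ⟨A, hA, hA', h⟩ := hF
  refine ⟨Fin.cons (fun _ => 0) fun i => Fin.cons 0 fun j => rename Fin.succ (A i j), ?_, ?_, ?_⟩
  · refine Fin.cases (fun j => isHomogeneous_zero _ _ _) fun i => Fin.cases ?_ fun j => ?_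
    · exact isHomogeneous_zero _ _ _
    · exact (hA i j).rename_isHomogeneous
  · refine Fin.cases (Fin.cases (by simp) (by simp)) fun i => Fin.cases (by simp) fun j => ?_
    simp [hA' i j]
  · refine Fin.cases (by simp) fun i => ?_
    simp [Fin.sum_univ_succ, h]

/-- The Koszul section `(-∑ j, X (j + 1) * g j, X 0 * g 0, …, X 0 * g (N - 1))`. -/
noncomputable def coneSection {N : ℕ} (g : Fin N → MvPolynomial (Fin (N + 1)) ℂ) :
    Fin (N + 1) → MvPolynomial (Fin (N + 1)) ℂ :=
  Fin.cons (-∑ j, X j.succ * g j) fun j => X 0 * g j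

theorem coneSection_mem_koszulSections {N m : ℕ} {g : Fin N → MvPolynomial (Fin (N + 1)) ℂ}
    (hg : ∀ j, (g j).IsHomogeneous m) : coneSection g ∈ koszulSections (N + 1) m := by
  refine ⟨Fin.cons (Fin.cons 0 fun j => -g j) fun i => Fin.cons (g i) fun _ => 0, ?_, ?_, ?_⟩
  · refine Fin.cases (Fin.cases ?_ fun j => ?_) fun i => Fin.cases ?_ fun j => ?_
    · exact isHomogeneous_zero _ _ _
    · exact (hg j).neg
    · exact hg i
    · exact isHomogeneous_zero _ _ _
  · refine Fin.cases (Fin.cases (by simp) (by simp)) fun i => Fin.cases (by simp) (by simp)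
  · refine Fin.cases ?_ fun i => ?_
    · simp [coneSection, Fin.sum_univ_succ, mul_comm]
    · simp [coneSection, Fin.sum_univ_succ, mul_comm]

/-- The cone sections vanishing on the lattice points take arbitrary values at the points
`(0, z i)`, without using the slot `j₀`. -/
def ConeAbsorbs {ι : Type*} {N : ℕ} (m : ℕ) (C : Set (Fin N → ℕ)) (z : ι → Fin N → ℂ)
    (j₀ : Fin N) : Prop :=
  ∀ t : ι → ℂ, ∃ g : Fin N → MvPolynomial (Fin (N + 1)) ℂ, (∀ j, (g j).IsHomogeneous m) ∧
    (∀ j, ∀ l : latticeSet m C, eval (latticePoint l.1) (g j) = 0) ∧ g j₀ = 0 ∧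
    ∀ i, ∑ j, z i j * eval (Fin.cons 0 (z i)) (g j) = t i

/-- The lattice points `(1, l)` together with the points `(0, z i)`. -/
noncomputable def conePoints {ι : Type*} {N : ℕ} (m : ℕ) (C : Set (Fin N → ℕ))
    (z : ι → Fin N → ℂ) : latticeSet m C ⊕ ι → Fin (N + 1) → ℂ :=
  Sum.elim (fun l => latticePoint l.1) fun i => Fin.cons 0 (z i)

theorem exists_coneSection_add_eval {ι : Type*} {N m : ℕ} {C : Set (Fin N → ℕ)}
    {z : ι → Fin N → ℂ} {j₀ : Fin N} (habs : ConeAbsorbs m C z j₀)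
    {w : latticeSet m C ⊕ ι → Fin (N + 1) → ℂ}
    (hw : ∀ i, ∑ j, w i j * conePoints m C z i j = 0)
    {F : Fin N → MvPolynomial (Fin N) ℂ} (hF : F ∈ koszulSections N m)
    (hFz : ∀ i j, eval (z i) (F j) = w (Sum.inr i) j.succ) :
    ∃ g : Fin N → MvPolynomial (Fin (N + 1)) ℂ, (∀ j, (g j).IsHomogeneous m) ∧
      ∀ i j, eval (conePoints m C z i)
        (((Fin.cons 0 fun j => rename Fin.succ (F j) :
          Fin (N + 1) → MvPolynomial (Fin (N + 1)) ℂ) + coneSection g) j) = w i j := by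
  choose f hf hfv using fun j : Fin N => exists_isHomogeneous_eval_latticePoint C fun l =>
    w (Sum.inl l) j.succ - eval (latticePoint l.1) (rename Fin.succ (F j))
  obtain ⟨g, hg, hgv, -, hgz⟩ := habs fun i =>
    -w (Sum.inr i) 0 - ∑ j, z i j * eval (Fin.cons 0 (z i)) (f j)
  have hfg : ∀ j, (f j + g j).IsHomogeneous m := fun j => (hf j).add (hg j)
  refine ⟨fun j => f j + g j, hfg, ?_⟩
  have hmem := add_mem (lift_mem_koszulSections hF) (coneSection_mem_koszulSections hfg)
  rintro (l | i)
  · refine eq_of_sum_mul_eq_of_forall_ne (j := 0) (v := latticePoint l.1) ?_ ?_ ?_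
    · exact one_ne_zero
    · exact (sum_mul_eval_of_mem_koszulSections hmem _).trans (hw (Sum.inl l)).symm
    · intro j hj
      obtain ⟨j, rfl⟩ := Fin.exists_succ_eq.mpr hj
      have h0 : latticePoint l.1 0 = 1 := rfl
      simp only [conePoints, Sum.elim_inl, Pi.add_apply, Fin.cons_succ, coneSection, map_add,
        map_mul, eval_X, hfv, hgv, h0]
      ring
  · have h0 : (conePoints m C z (Sum.inr i)) = Fin.cons 0 (z i) := rfl
    rw [h0]
    refine Fin.cases ?_ fun j => ?_
    · have := hgz i
      simp only [Pi.add_apply, Fin.cons_zero, coneSection, map_add, map_neg, map_sum, map_mul,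
        eval_X, Fin.cons_succ, mul_add, Finset.sum_add_distrib, this, map_zero]
      ring
    · simp only [Pi.add_apply, Fin.cons_succ, coneSection, map_add, map_mul, eval_X, Fin.cons_zero,
        eval_rename, zero_mul, add_zero]
      exact hFz i j

theorem IsGoodConfig.cone {ι : Type*} {N m k : ℕ} {C : Set (Fin N → ℕ)} (hC : IsCovering m C)
    {z : ι → Fin N → ℂ} (hz : IsGoodConfig m k z) {j₀ : Fin N} (habs : ConeAbsorbs m C z j₀) :
    IsGoodConfig m k (conePoints m C z) := by
  classical
  refine ⟨fun w hw => ?_, fun P hP hPv => ?_⟩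
  · obtain ⟨F, hF, hFz⟩ := hz.interp (fun i j => w (Sum.inr i) j.succ) (by
      intro i
      have := hw (Sum.inr i)
      simpa [Fin.sum_univ_succ, conePoints] using this)
    obtain ⟨g, hg, hgv⟩ := exists_coneSection_add_eval habs hw hF hFz
    exact ⟨_, add_mem (lift_mem_koszulSections hF) (coneSection_mem_koszulSections hg), hgv⟩
  · have hlift : ∀ Q ∈ productSpan m k z,
        ∃ R ∈ productSpan m k (conePoints m C z), restrictZero N R = Q := by
      intro Q hQ
      refine Submodule.span_induction ?_ ?_ ?_ ?_ hQ
      · rintro _ ⟨p, hp, F, hF, j, rfl⟩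
        obtain ⟨g, hg, hgv⟩ := exists_coneSection_add_eval (w := fun _ _ => 0) habs (by simp)
          hF.1 hF.2
        refine ⟨_, mul_mem_productSpan (p := rename Fin.succ p) hp.rename_isHomogeneous
          ⟨add_mem (lift_mem_koszulSections hF.1) (coneSection_mem_koszulSections hg), hgv⟩
          j.succ, ?_⟩
        simp [coneSection, restrictZero_rename, restrictZero_X_zero]
      · exact ⟨0, zero_mem _, map_zero _⟩
      · rintro x y _ _ ⟨R, hR, rfl⟩ ⟨S, hS, rfl⟩
        exact ⟨R + S, add_mem hR hS, map_add _ _ _⟩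
      · rintro c x _ ⟨R, hR, rfl⟩
        exact ⟨c • R, Submodule.smul_mem _ _ hR, map_smul _ _ _⟩
    obtain ⟨R, hR, hRP⟩ := hlift (restrictZero N P) (hz.gen _ (isHomogeneous_restrictZero hP)
      fun i => by rw [eval_restrictZero]; exact hPv (Sum.inr i))
    obtain ⟨P', hP'⟩ := exists_eq_rename_restrictZero_add (P - R)
    rw [map_sub, hRP, sub_self, map_zero, zero_add] at hP'
    have hhom : P'.IsHomogeneous (k + m) := by
      refine isHomogeneous_of_X_mul (i := 0) ?_
      rw [← hP']
      exact hP.sub (isHomogeneous_of_mem_productSpan hR)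
    have hPv' : ∀ l : latticeSet m C, eval (latticePoint l.1) P' = 0 := by
      intro l
      have h1 : eval (conePoints m C z (Sum.inl l)) (P - R) = 0 := by
        rw [map_sub, hPv, eval_eq_zero_of_mem_productSpan hR, sub_self]
      rw [hP', map_mul, eval_X] at h1
      simpa [conePoints, latticePoint] using h1
    suffices X 0 * P' ∈ productSpan m k (conePoints m C z) by
      rw [← hP'] at this
      have := add_mem this hR
      rwa [sub_add_cancel] at this
    refine Submodule.span_induction ?_ ?_ ?_ ?_ (hC.mem_span hhom hPv')
    · rintro _ ⟨r, g, hr, hg, hgv, rfl⟩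
      obtain ⟨f, hf, hfv, hf₀, hfz⟩ := habs fun i => -(z i j₀ * eval (Fin.cons 0 (z i)) g)
      set slot : Fin N → MvPolynomial (Fin (N + 1)) ℂ := Pi.single j₀ g with hslot
      have hfg : ∀ j, (f j + slot j).IsHomogeneous m := by
        intro j
        refine (hf j).add ?_
        by_cases hj : j = j₀
        · subst hj
          rwa [hslot, Pi.single_eq_same]
        · rw [hslot, Pi.single_eq_of_ne hj]
          exact isHomogeneous_zero _ _ _
      have hgv' : ∀ (l : latticeSet m C) j,
          eval (latticePoint l.1) (slot j) = 0 := by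
        intro l j
        by_cases hj : j = j₀
        · subst hj
          rw [hslot, Pi.single_eq_same, hgv]
        · rw [hslot, Pi.single_eq_of_ne hj, map_zero]
      have hvan : coneSection (fun j => f j + slot j) ∈
          vanishingSections m (conePoints m C z) := by
        refine ⟨coneSection_mem_koszulSections hfg, ?_⟩
        rintro (l | i)
        · refine Fin.cases ?_ fun j => ?_
          · simp [coneSection, conePoints, hfv, hgv']
          · simp [coneSection, conePoints, hfv, hgv']
        · refine Fin.cases ?_ fun j => ?_
          · have h1 : ∑ j, z i j * eval (Fin.cons 0 (z i))
                (slot j) =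
                z i j₀ * eval (Fin.cons 0 (z i)) g := by
              rw [Finset.sum_eq_single j₀]
              · rw [hslot, Pi.single_eq_same]
              · intro j _ hj
                rw [hslot, Pi.single_eq_of_ne hj, map_zero, mul_zero]
              · simp
            simp only [coneSection, conePoints, Sum.elim_inr, Fin.cons_zero, map_neg, map_sum,
              map_mul, eval_X, Fin.cons_succ, map_add, mul_add, Finset.sum_add_distrib, hfz, h1]
            ring
          · simp [coneSection, conePoints]
      have := mul_mem_productSpan hr hvan j₀.succ
      convert this using 1
      simp only [coneSection, Fin.cons_succ, hf₀, hslot, Pi.single_eq_same, zero_add]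
      ring
    · simp
    · intro x y _ _ hx hy
      rw [mul_add]
      exact add_mem hx hy
    · intro c x _ hx
      rw [mul_smul_comm]
      exact Submodule.smul_mem _ _ hx

theorem exists_surjective_of_injective {ι : Type*} [Fintype ι] {N : ℕ} {b : ι → Fin N → ℕ}
    (hb : Function.Injective b) :
    ∃ D : MvPolynomial (ι × Fin N) ℂ, D ≠ 0 ∧ ∀ z : ι → Fin N → ℂ,
      eval (fun t => z t.1 t.2) D ≠ 0 →
        ∀ y : ι → ℂ, ∃ c : ι → ℂ, ∀ l, ∑ i, c i * ∏ j, z l j ^ b i j = y l := by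
  classical
  let e : ι → ι → (ι × Fin N →₀ ℕ) := fun l i =>
    Finsupp.equivFunOnFinite.symm fun t => if t.1 = l then b i t.2 else 0
  let M : Matrix ι ι (MvPolynomial (ι × Fin N) ℂ) := Matrix.of fun l i => monomial (e l i) 1
  refine ⟨M.det, fun h0 => ?_, fun z hz y => ?_⟩
  · have h1 : coeff (∑ i, e i i) M.det = 1 := by
      rw [Matrix.det_apply, coeff_sum, Finset.sum_eq_single 1]
      · simp [M, ← monomial_sum_one]
      · intro σ _ hσ
        have : ∑ i, e (σ i) i ≠ ∑ i, e i i := by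
          intro heq
          refine hσ (Equiv.ext fun i => ?_)
          refine (hb (funext fun j => ?_)).symm
          have h2 := DFunLike.congr_fun heq (σ i, j)
          simpa [e, Finsupp.finsetSum_apply] using h2
        rw [coeff_smul]
        simp only [M, Matrix.of_apply, ← monomial_sum_one, coeff_monomial]
        rw [if_neg this, smul_zero]
      · simp
    rw [h0, coeff_zero] at h1
    exact zero_ne_one h1
  · rw [RingHom.map_det] at hz
    set A : Matrix ι ι ℂ := (eval fun t => z t.1 t.2).mapMatrix M with hA
    have hAe : ∀ l i, A l i = ∏ j, z l j ^ b i j := by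
      intro l i
      simp only [hA, RingHom.mapMatrix_apply, Matrix.map_apply, M, Matrix.of_apply, eval_monomial,
        one_mul]
      rw [Finsupp.prod_fintype _ _ (by simp), Fintype.prod_prod_type, Finset.prod_eq_single l]
      · simp [e]
      · intro a _ ha
        simp [e, ha]
      · simp
    refine ⟨A⁻¹.mulVec y, fun l => ?_⟩
    have h1 : A.mulVec (A⁻¹.mulVec y) = y := by
      rw [Matrix.mulVec_mulVec, Matrix.mul_nonsing_inv _ (isUnit_iff_ne_zero.mpr hz),
        Matrix.one_mulVec]
    rw [← congrFun h1 l]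
    refine Finset.sum_congr rfl fun i _ => ?_
    rw [← hAe, mul_comm]

theorem exists_eval_ne_zero {σ : Type*} {p : MvPolynomial σ ℂ} (hp : p ≠ 0) :
    ∃ t, eval t p ≠ 0 := by
  by_contra! h
  exact hp (MvPolynomial.funext fun t => by rw [h, map_zero])

theorem exists_isGoodConfig_cone {ι : Type*} [Fintype ι] {N m k : ℕ} (hN : 2 ≤ N)
    {C : Set (Fin N → ℕ)} (hC : IsCovering m C) {z₀ : ι → Fin N → ℂ} (hz₀ : IsGoodConfig m k z₀)
    (j₀ : Fin N) (slot : ι → Fin N) (hslot : ∀ i, slot i ≠ j₀) (α : ι → Fin N → ℕ)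
    (hα : ∀ i, α i ∈ C) (hinj : Function.Injective fun i => α i + Pi.single (slot i) 1) :
    ∃ v : latticeSet m C ⊕ ι → Fin (N + 1) → ℂ, IsGoodConfig m k v := by
  classical
  obtain ⟨D₁, hD₁, hD₁'⟩ := hz₀.exists_open hN
  obtain ⟨D₂, hD₂, hD₂'⟩ := exists_surjective_of_injective hinj
  have hD₁0 : D₁ ≠ 0 := by
    rintro rfl
    exact hD₁ (map_zero _)
  obtain ⟨t, ht⟩ := exists_eval_ne_zero (mul_ne_zero hD₁0 hD₂)
  rw [map_mul] at ht
  set z : ι → Fin N → ℂ := fun i j => t (i, j)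
  refine ⟨conePoints m C z, (hD₁' z (left_ne_zero_of_mul ht)).cone hC (j₀ := j₀) fun y => ?_⟩
  obtain ⟨c, hc⟩ := hD₂' z (right_ne_zero_of_mul ht) y
  refine ⟨fun j => ∑ i, if slot i = j then MvPolynomial.C (c i) * latticeForm (α i) else 0,
    fun j => ?_, fun j l => ?_, ?_, fun l => ?_⟩
  · refine IsHomogeneous.sum _ _ _ fun i _ => ?_
    split_ifs
    · rw [← hC.sum_eq _ (hα i)]
      exact (isHomogeneous_latticeForm (α i)).C_mul _
    · exact isHomogeneous_zero _ _ _
  · rw [map_sum]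
    refine Finset.sum_eq_zero fun i _ => ?_
    split_ifs
    · rw [map_mul, hC.eval_latticeForm (hα i), mul_zero]
    · exact map_zero _
  · exact Finset.sum_eq_zero fun i _ => if_neg (hslot i)
  · rw [← hc l]
    simp only [map_sum, Finset.mul_sum]
    rw [Finset.sum_comm]
    refine Finset.sum_congr rfl fun i _ => ?_
    rw [Finset.sum_eq_single (slot i)]
    · simp only [if_true, map_mul, eval_C, eval_cons_zero_latticeForm, Pi.add_apply, pow_add,
        Finset.prod_mul_distrib]
      rw [Finset.prod_eq_single (f := fun j => z l j ^ (Pi.single (slot i) 1 : Fin N → ℕ) j)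
        (slot i)]
      · simp only [Pi.single_eq_same, pow_one]
        ring
      · intro j _ hj
        rw [Pi.single_eq_of_ne hj, pow_zero]
      · simp
    · intro j _ hj
      rw [if_neg hj.symm, map_zero, mul_zero]
    · simp

theorem finite_subtype_sum_eq (n m : ℕ) : Finite {α : Fin n → ℕ // ∑ j, α j = m} := by
  refine Set.Finite.subset (Set.finite_Icc (0 : Fin n → ℕ) fun _ => m) fun α hα => ?_
  exact ⟨zero_le, fun j => (Finset.single_le_sum (fun _ _ => Nat.zero_le _)
    (Finset.mem_univ j)).trans (le_of_eq hα)⟩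

/-- The exponents of weight `m` in two variables other than `(1, m - 1)`. -/
def planeCover (m : ℕ) : Set (Fin 2 → ℕ) := {γ | ∑ j, γ j = m ∧ γ 0 ≠ 1}

theorem isCovering_planeCover {m : ℕ} (hm : 2 ≤ m) : IsCovering m (planeCover m) := by
  refine ⟨fun γ hγ => hγ.1, fun α hα => ?_⟩
  rw [Fin.sum_univ_two] at hα
  by_cases h : α 0 ≤ 1
  · refine ⟨![0, m], ⟨by simp, by simp⟩, ?_⟩
    simp only [Pi.le_def, Fin.forall_fin_two, Matrix.cons_val_zero, Matrix.cons_val_one]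
    omega
  · refine ⟨![min (α 0) m, m - min (α 0) m], ⟨?_, ?_⟩, ?_⟩
    · simp only [Fin.sum_univ_two, Matrix.cons_val_zero, Matrix.cons_val_one]
      omega
    · simp only [Matrix.cons_val_zero]
      omega
    · simp only [Pi.le_def, Fin.forall_fin_two, Matrix.cons_val_zero, Matrix.cons_val_one]
      omega

/-- The exponents of weight `m` in three variables whose first entry is even or equal to `m`. -/
def spaceCover (m : ℕ) : Set (Fin 3 → ℕ) := {γ | ∑ j, γ j = m ∧ (Even (γ 0) ∨ γ 0 = m)}

theorem isCovering_spaceCover (m : ℕ) : IsCovering m (spaceCover m) := by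
  refine ⟨fun γ hγ => hγ.1, fun α hα => ?_⟩
  rw [Fin.sum_univ_three] at hα
  obtain ⟨a, ha, ha', hab⟩ : ∃ a ≤ α 0, (Even a ∨ a = m) ∧ a ≤ m ∧ m - a ≤ α 1 + α 2 := by
    by_cases h : m ≤ α 0
    · exact ⟨m, h, Or.inr rfl, le_rfl, by omega⟩
    · rcases Nat.even_or_odd (α 0) with he | ⟨b, hb⟩
      · exact ⟨α 0, le_rfl, Or.inl he, by omega, by omega⟩
      · exact ⟨α 0 - 1, by omega, Or.inl ⟨b, by omega⟩, by omega, by omega⟩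
  refine ⟨![a, min (α 1) (m - a), m - a - min (α 1) (m - a)], ⟨?_, ha'⟩, ?_⟩
  · simp [Fin.sum_univ_three]
    omega
  · intro j
    fin_cases j <;> simp <;> omega

theorem exists_isGoodConfig_plane {m : ℕ} (hm : 2 ≤ m) (k : ℕ) :
    ∃ v : {α : Fin 3 → ℕ // ∑ j, α j = m} → Fin 3 → ℂ, IsGoodConfig m k v := by
  classical
  have : Finite (planeCover m) := by
    refine Set.Finite.subset (Set.finite_Icc (0 : Fin 2 → ℕ) fun _ => m) fun α hα => ?_
    exact ⟨zero_le, fun j => (Finset.single_le_sum (fun _ _ => Nat.zero_le _)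
      (Finset.mem_univ j)).trans hα.1.le⟩
  have : Fintype (planeCover m) := Fintype.ofFinite _
  let f : planeCover m → latticeSet m {γ : Fin 1 → ℕ | ∑ j, γ j = m} := fun γ =>
    ⟨fun _ => γ.1 0 - 1, by
      have h1 := γ.2.1
      rw [Fin.sum_univ_two] at h1
      simp only [latticeSet, Set.mem_ofPred_eq, Finset.univ_unique, Finset.sum_singleton]
      omega⟩
  have hf : Function.Injective f := by
    rintro ⟨γ, hγ, hγ1⟩ ⟨δ, hδ, hδ1⟩ h
    have h1 : γ 0 - 1 = δ 0 - 1 := congrFun (congrArg Subtype.val h) 0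
    rw [Fin.sum_univ_two] at hγ hδ
    refine Subtype.ext (funext (Fin.forall_fin_two.mpr ⟨?_, ?_⟩)) <;> simp only <;> omega
  obtain ⟨v, hv⟩ := exists_isGoodConfig_cone le_rfl (isCovering_planeCover hm)
    ((isGoodConfig_latticePoint_one m k).comp le_rfl hf) 1 (fun _ => 0) (by simp)
    (fun γ => γ.1) (fun γ => γ.2) fun γ δ h => Subtype.ext (add_right_cancel h)
  let g : {α : Fin 3 → ℕ // ∑ j, α j = m} → latticeSet m (planeCover m) ⊕ planeCover m := fun α =>
    if h : Fin.tail α.1 ∈ planeCover m then Sum.inr ⟨_, h⟩ else Sum.inl ⟨Fin.tail α.1, by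
      refine ⟨?_, h⟩
      have := α.2
      rw [Fin.sum_univ_succ] at this
      exact le_of_add_le_right this.le⟩
  have hg : Function.Injective g := by
    rintro ⟨α, hα⟩ ⟨β, hβ⟩ h
    have htail : Fin.tail α = Fin.tail β := by
      simp only [g] at h
      split_ifs at h with h1 h2 h2
      · exact congrArg Subtype.val (Sum.inr_injective h)
      · exact congrArg Subtype.val (Sum.inl_injective h)
    rw [Fin.sum_univ_three] at hα hβ
    have h1 : α 1 = β 1 := congrFun htail 0
    have h2 : α 2 = β 2 := congrFun htail 1
    refine Subtype.ext (funext fun j => ?_)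
    fin_cases j
    · simp only [Fin.zero_eta]
      omega
    · exact h1
    · exact h2
  exact ⟨v ∘ g, hv.comp (by omega) hg⟩

theorem exists_isGoodConfig_space {m : ℕ} (hm : 2 ≤ m) (k : ℕ) :
    ∃ v : latticeSet m (spaceCover m) ⊕ {α : Fin 3 → ℕ // ∑ j, α j = m} → Fin 4 → ℂ,
      IsGoodConfig m k v := by
  classical
  have := finite_subtype_sum_eq 3 m
  have : Fintype {α : Fin 3 → ℕ // ∑ j, α j = m} := Fintype.ofFinite _
  obtain ⟨z, hz⟩ := exists_isGoodConfig_plane hm k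
  refine exists_isGoodConfig_cone (by omega) (isCovering_spaceCover m) hz 2
    (fun α => if Even (α.1 0) then 0 else 1) (fun α => by split_ifs <;> decide)
    (fun α => if Even (α.1 0) then α.1 else ![α.1 0 - 1, α.1 1 + 1, α.1 2]) (fun α => ?_) ?_
  · have hα := α.2
    rw [Fin.sum_univ_three] at hα
    split_ifs with h
    · exact ⟨α.2, Or.inl h⟩
    · rw [Nat.not_even_iff_odd] at h
      obtain ⟨b, hb⟩ := h
      refine ⟨?_, Or.inl ⟨b, ?_⟩⟩
      · simp [Fin.sum_univ_three]
        omega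
      · simp [hb]
        omega
  · rintro ⟨α, hα⟩ ⟨β, hβ⟩ h
    have h0 := congrFun h 0
    have h1 := congrFun h 1
    have h2 := congrFun h 2
    refine Subtype.ext ?_
    rw [Fin.sum_univ_three] at hα hβ
    suffices α 0 = β 0 ∧ α 1 = β 1 by
      refine funext fun j => ?_
      fin_cases j
      · exact this.1
      · exact this.2
      · simp only [Fin.reduceFinMk]
        omega
    by_cases hα' : Even (α 0) <;> by_cases hβ' : Even (β 0) <;>
      simp [hα', hβ'] at h0 h1 h2 <;> rw [Nat.even_iff] at hα' hβ' <;> omega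

theorem six_mul_choose_add_three (m : ℕ) :
    6 * (m + 3).choose m = (m + 3) * (m + 2) * (m + 1) := by
  have h := Nat.descFactorial_eq_factorial_mul_choose (m + 3) 3
  rw [Nat.choose_symm_add, show (6 : ℕ) = Nat.factorial 3 from rfl, ← h]
  simp [Nat.descFactorial]
  ring

theorem sum_range_sub_two_mul (n d : ℕ) :
    ∑ b ∈ Finset.range n, (2 * n + d - 2 * b) = n * (n + 1 + d) := by
  have h : ∀ b ∈ Finset.range n, ((2 * n + d - 2 * b : ℕ) : ℤ) = 2 * n + d - 2 * b := by
    intro b hb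
    have := Finset.mem_range.mp hb
    omega
  have key : ∀ n : ℕ, ∀ x : ℤ,
      ∑ b ∈ Finset.range n, (x - 2 * (b : ℤ)) = n * (x - n + 1) := by
    intro n x
    induction n with
    | zero => simp
    | succ n ih =>
      rw [Finset.sum_range_succ, ih]
      push_cast
      ring
  zify
  rw [Finset.sum_congr rfl h, key]
  ring

theorem exists_injective_space {m s : ℕ} (hm : 2 ≤ m)
    (hs : 3 * s + m * (m + 1) / 2 + 8 ≤ (m + 4) * (m + 3) * (m + 1) / 2) :
    ∃ f : Fin s → latticeSet m (spaceCover m) ⊕ {α : Fin 3 → ℕ // ∑ j, α j = m},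
      Function.Injective f := by
  classical
  let T := Sym (Fin 4) m ⊕ (Σ b : Fin (m / 2), Fin (m - 2 * b))
  have hcard : s ≤ Fintype.card T := by
    have h1 : Fintype.card T = (m + 3).choose m + ∑ b ∈ Finset.range (m / 2), (m - 2 * b) := by
      rw [Fintype.card_sum, Sym.card_sym_eq_choose, Fintype.card_sigma, Finset.sum_range]
      simp [show 4 + m - 1 = m + 3 by omega]
    have h2 := six_mul_choose_add_three m
    rw [h1]
    have h3 : m * (m + 1) / 2 * 2 = m * (m + 1) :=
      Nat.div_mul_cancel (Nat.even_mul_succ_self m).two_dvd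
    have h4 : (m + 4) * (m + 3) * (m + 1) / 2 * 2 ≤ (m + 4) * (m + 3) * (m + 1) :=
      Nat.div_mul_le_self _ _
    obtain ⟨n, rfl | rfl⟩ := Nat.even_or_odd' m
    · have h5 := sum_range_sub_two_mul n 0
      rw [show 2 * n / 2 = n by omega]
      simp only [add_zero] at h5
      rw [h5]
      generalize (2 * n + 3).choose (2 * n) = c at h2
      by_contra! hlt
      zify at *
      nlinarith [sq_nonneg ((n : ℤ) - 2)]
    · have h5 := sum_range_sub_two_mul n 1
      rw [show (2 * n + 1) / 2 = n by omega]
      rw [h5]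
      generalize (2 * n + 1 + 3).choose (2 * n + 1) = c at h2
      by_contra! hlt
      have h6 : (0 : ℤ) ≤ ((n : ℤ) - 1) * ((n : ℤ) - 2) := by
        rcases le_or_gt n 1 with h | h
        · exact mul_nonneg_of_nonpos_of_nonpos (by omega) (by omega)
        · exact mul_nonneg (by omega) (by omega)
      zify at *
      nlinarith
  have hfin : Fintype.card (Fin s) ≤ Fintype.card T := by simpa using hcard
  obtain ⟨i⟩ := Function.Embedding.nonempty_of_card_le hfin
  let A : {α : Fin 4 → ℕ // ∑ j, α j = m} →
      latticeSet m (spaceCover m) ⊕ {α : Fin 3 → ℕ // ∑ j, α j = m} := fun β =>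
    if h : β.1 0 = 0 then Sum.inr ⟨Fin.tail β.1, by
      have := β.2
      rw [Fin.sum_univ_succ, h, zero_add] at this
      exact this⟩
    else Sum.inl ⟨Fin.tail β.1, by
      have : β.1 0 + ∑ j, Fin.tail β.1 j = m := (Fin.sum_univ_succ β.1).symm.trans β.2
      refine ⟨by omega, fun hmem => ?_⟩
      have := hmem.1
      omega⟩
  let B : (Σ b : Fin (m / 2), Fin (m - 2 * b)) →
      latticeSet m (spaceCover m) ⊕ {α : Fin 3 → ℕ // ∑ j, α j = m} := fun p =>
    Sum.inl ⟨![2 * p.1 + 1, p.2, m - (2 * p.1 + 1) - p.2], by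
      have h1 := p.1.2
      have h2 := p.2.2
      refine ⟨?_, ?_⟩
      · simp [Fin.sum_univ_three]
        omega
      · rintro ⟨-, h | h⟩
        · simp at h
        · simp at h
          omega⟩
  have hA : Function.Injective A := by
    rintro ⟨β, hβ⟩ ⟨δ, hδ⟩ h
    have htail : Fin.tail β = Fin.tail δ := by
      simp only [A] at h
      split_ifs at h with h1 h2 h2
      · exact congrArg Subtype.val (Sum.inr_injective h)
      · exact congrArg Subtype.val (Sum.inl_injective h)
    refine Subtype.ext (funext (Fin.cases ?_ fun j => congrFun htail j))
    rw [Fin.sum_univ_succ] at hβ hδ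
    have : ∑ j : Fin 3, β j.succ = ∑ j : Fin 3, δ j.succ :=
      Finset.sum_congr rfl fun j _ => congrFun htail j
    change β 0 = δ 0
    omega
  have hB : Function.Injective B := by
    rintro ⟨b, c⟩ ⟨b', c'⟩ h
    have h1 := congrArg Subtype.val (Sum.inl_injective h)
    have h2 : 2 * (b : ℕ) + 1 = 2 * b' + 1 := congrFun h1 0
    have h3 : (c : ℕ) = c' := congrFun h1 1
    obtain rfl : b = b' := Fin.ext (by omega)
    rw [Fin.ext h3]
  have hAB : ∀ β p, A β ≠ B p := by
    rintro ⟨β, hβ⟩ p h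
    simp only [A, B] at h
    split_ifs at h with h1
    have h2 := congrArg Subtype.val (Sum.inl_injective h)
    have h3 : β 1 = 2 * p.1 + 1 := congrFun h2 0
    have h4 : β 2 = p.2 := congrFun h2 1
    have h5 : β 3 = m - (2 * p.1 + 1) - p.2 := congrFun h2 2
    rw [Fin.sum_univ_four] at hβ
    have := p.1.2
    have := p.2.2
    omega
  refine ⟨Sum.elim (A ∘ Sym.equivNatSumOfFintype (Fin 4) m) B ∘ i,
    Function.Injective.comp ?_ i.injective⟩
  exact (hA.comp (Equiv.injective _)).sumElim hB fun β p => hAB _ p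

/-- The coordinate points and the unit point of `ℂ⁴`. -/
noncomputable def framePoints : Option (Fin 4) → Fin 4 → ℂ
  | none => fun _ => 1
  | some a => Pi.single a 1

theorem exists_mem_vanishingSections_framePoints {j p q : Fin 4} (hp : j ≠ p) (hq : j ≠ q) :
    ∃ F ∈ vanishingSections 1 framePoints, ∃ b, F b = X j * (X p - X q) := by
  classical
  obtain ⟨b, hbj, hbp, hbq⟩ : ∃ b : Fin 4, b ≠ j ∧ b ≠ p ∧ b ≠ q := by
    clear hp hq
    revert j p q
    decide
  let δ : Fin 4 → Fin 4 → ℂ := fun a i => if i = a then 1 else 0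
  let c : Fin 4 → Fin 4 → ℂ := fun i i' => δ b i * δ p i' + δ p i * δ q i' + δ q i * δ b i'
  let F : Fin 4 → MvPolynomial (Fin 4) ℂ := fun i => X j *
    (C (δ b i) * (X p - X q) + C (δ p i) * (X q - X b) + C (δ q i) * (X b - X p))
  refine ⟨F, ⟨⟨fun i i' => C (c i i' - c i' i) * X j, ?_, ?_, ?_⟩, ?_⟩, b, ?_⟩
  · exact fun i i' => (isHomogeneous_X _ _).C_mul _
  · intro i i'
    change C (c i' i - c i i') * X j = -(C (c i i' - c i' i) * X j)
    rw [← neg_mul, ← C_neg, neg_sub]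
  · intro i
    have h : ∀ a : Fin 4, ∑ i' : Fin 4, C (δ a i') * X i' = (X a : MvPolynomial (Fin 4) ℂ) := by
      intro a
      rw [Finset.sum_eq_single a]
      · simp [δ]
      · intro i' _ hi'
        simp [δ, hi']
      · simp
    have : ∑ i', C (c i i' - c i' i) * X j * X i' = X j *
        (C (δ b i) * ((∑ i', C (δ p i') * X i') - ∑ i', C (δ q i') * X i') +
          C (δ p i) * ((∑ i', C (δ q i') * X i') - ∑ i', C (δ b i') * X i') +
          C (δ q i) * ((∑ i', C (δ b i') * X i') - ∑ i', C (δ p i') * X i')) := by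
      simp only [Finset.mul_sum, ← Finset.sum_sub_distrib, ← Finset.sum_add_distrib]
      refine Finset.sum_congr rfl fun i' _ => ?_
      simp only [c, C_sub, C_add, C_mul]
      ring
    rw [this, h, h, h]
  · rintro (_ | a) i
    · simp [F, framePoints]
    · by_cases ha : a = j
      · subst ha
        simp [F, framePoints, hp.symm, hq.symm, hbj]
      · simp [F, framePoints, Ne.symm ha]
  · simp [F, δ, hbp, hbq]

/-- The forms of degree `d` in the ideal generated by the `X j * (X p - X q)`
with `j ≠ p` and `j ≠ q`. -/
noncomputable def frameIdeal (d : ℕ) : Submodule ℂ (MvPolynomial (Fin 4) ℂ) :=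
  Submodule.span ℂ {Q | ∃ (e : ℕ) (r : MvPolynomial (Fin 4) ℂ) (j p q : Fin 4), e + 2 = d ∧
    r.IsHomogeneous e ∧ j ≠ p ∧ j ≠ q ∧ Q = r * (X j * (X p - X q))}

theorem mul_mem_frameIdeal {e : ℕ} {r : MvPolynomial (Fin 4) ℂ} (hr : r.IsHomogeneous e)
    {j p q : Fin 4} (hp : j ≠ p) (hq : j ≠ q) :
    r * (X j * (X p - X q)) ∈ frameIdeal (e + 2) :=
  Submodule.subset_span ⟨e, r, j, p, q, rfl, hr, hp, hq, rfl⟩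

theorem X_mul_mem_frameIdeal {d : ℕ} {Q : MvPolynomial (Fin 4) ℂ} (hQ : Q ∈ frameIdeal d)
    (i : Fin 4) : X i * Q ∈ frameIdeal (d + 1) := by
  refine Submodule.span_induction ?_ ?_ ?_ ?_ hQ
  · rintro _ ⟨e, r, j, p, q, rfl, hr, hp, hq, rfl⟩
    rw [← mul_assoc, show e + 2 + 1 = 1 + e + 2 by ring]
    exact mul_mem_frameIdeal ((isHomogeneous_X _ _).mul hr) hp hq
  · simp
  · intro x y _ _ hx hy
    rw [mul_add]
    exact add_mem hx hy
  · intro c x _ hx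
    rw [mul_smul_comm]
    exact Submodule.smul_mem _ _ hx

theorem mul_X_mul_X_sub_mem_frameIdeal {e : ℕ} {r : MvPolynomial (Fin 4) ℂ}
    (hr : r.IsHomogeneous e) {i j : Fin 4} (hij : i ≠ j) :
    r * (X i * X j) - r * (X 0 * X 1) ∈ frameIdeal (e + 2) := by
  by_cases hi : i = 0
  · subst hi
    have := mul_mem_frameIdeal hr hij (show (0 : Fin 4) ≠ 1 by decide)
    convert this using 1
    ring
  · have := add_mem (mul_mem_frameIdeal hr hij hi)
      (mul_mem_frameIdeal hr (Ne.symm hi) (show (0 : Fin 4) ≠ 1 by decide))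
    convert this using 1
    ring

theorem mul_X_mul_sub_mem_frameIdeal {e : ℕ} {r : MvPolynomial (Fin 4) ℂ}
    (hr : r.IsHomogeneous e) (i : Fin 4) :
    X i * (r * (X 0 * X 1)) - X 0 * (r * (X 0 * X 1)) ∈ frameIdeal (e + 3) := by
  have hr0 := hr.mul (isHomogeneous_X ℂ (0 : Fin 4))
  have hr1 := hr.mul (isHomogeneous_X ℂ (1 : Fin 4))
  by_cases hi : i = 1
  · subst hi
    have := add_mem (mul_mem_frameIdeal hr1 (show (0 : Fin 4) ≠ 1 by decide)
      (show (0 : Fin 4) ≠ 2 by decide)) (mul_mem_frameIdeal hr0 (show (1 : Fin 4) ≠ 2 by decide)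
      (show (1 : Fin 4) ≠ 0 by decide))
    convert this using 1
    ring
  · have := mul_mem_frameIdeal hr0 (Ne.symm hi) (show (1 : Fin 4) ≠ 0 by decide)
    convert this using 1
    ring

theorem X_pow_mul_sub_mem_frameIdeal (e : ℕ) (i : Fin 4) :
    X i ^ e * (X 0 * X 1) - X 0 ^ e * (X 0 * X 1) ∈ frameIdeal (e + 2) := by
  induction e with
  | zero => simp
  | succ e ih =>
    have := add_mem (X_mul_mem_frameIdeal ih i)
      (mul_X_mul_sub_mem_frameIdeal (isHomogeneous_X_pow (0 : Fin 4) e) i)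
    convert this using 1
    ring

theorem mem_span_frame {d : ℕ} {P : MvPolynomial (Fin 4) ℂ} (hP : P.IsHomogeneous d) :
    P ∈ frameIdeal d ⊔ Submodule.span ℂ ({Q | ∃ i : Fin 4, Q = X i ^ d} ∪
      {Q | ∃ e, e + 2 = d ∧ Q = X 0 ^ e * (X 0 * X 1)}) := by
  refine mem_of_isHomogeneous_of_X_mul (fun d => frameIdeal d ⊔
    Submodule.span ℂ ({Q | ∃ i : Fin 4, Q = X i ^ d} ∪
      {Q | ∃ e, e + 2 = d ∧ Q = X 0 ^ e * (X 0 * X 1)})) ?_ ?_ hP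
  · exact Submodule.mem_sup_right (Submodule.subset_span (Or.inl ⟨0, by simp⟩))
  · intro d i p hp
    obtain ⟨u, hu, w, hw, rfl⟩ := Submodule.mem_sup.mp hp
    rw [mul_add]
    refine add_mem (Submodule.mem_sup_left (X_mul_mem_frameIdeal hu i)) ?_
    refine Submodule.span_induction ?_ ?_ ?_ ?_ hw
    · have hmixed : ∀ e, X 0 ^ e * (X 0 * X 1) ∈ frameIdeal (e + 2) ⊔
          Submodule.span ℂ ({Q : MvPolynomial (Fin 4) ℂ | ∃ i : Fin 4, Q = X i ^ (e + 2)} ∪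
            {Q | ∃ e', e' + 2 = e + 2 ∧ Q = X 0 ^ e' * (X 0 * X 1)}) := fun e =>
        Submodule.mem_sup_right (Submodule.subset_span (Or.inr ⟨e, rfl, rfl⟩))
      rintro _ (⟨j, rfl⟩ | ⟨e, rfl, rfl⟩)
      · by_cases hij : i = j
        · subst hij
          exact Submodule.mem_sup_right (Submodule.subset_span (Or.inl ⟨i, by ring⟩))
        · cases d with
          | zero => exact Submodule.mem_sup_right (Submodule.subset_span (Or.inl ⟨i, by ring⟩))
          | succ e =>
            have := add_mem (Submodule.mem_sup_left (add_mem
              (mul_X_mul_X_sub_mem_frameIdeal (isHomogeneous_X_pow j e) hij)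
              (X_pow_mul_sub_mem_frameIdeal e j))) (hmixed e)
            convert this using 1
            ring
      · have := add_mem (Submodule.mem_sup_left
          (mul_X_mul_sub_mem_frameIdeal (isHomogeneous_X_pow (0 : Fin 4) e) i)) (hmixed (e + 1))
        convert this using 1
        ring
    · simp
    · intro x y _ _ hx hy
      rw [mul_add]
      exact add_mem hx hy
    · intro c x _ hx
      rw [mul_smul_comm]
      exact Submodule.smul_mem _ _ hx

theorem frameIdeal_le_productSpan (k : ℕ) : frameIdeal (k + 2) ≤ productSpan 1 k framePoints := by
  refine Submodule.span_le.mpr ?_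
  rintro _ ⟨e, r, j, p, q, he, hr, hp, hq, rfl⟩
  obtain rfl : e = k := by omega
  obtain ⟨F, hF, b, hb⟩ := exists_mem_vanishingSections_framePoints hp hq
  rw [← hb]
  exact mul_mem_productSpan hr hF b

theorem isGoodConfig_framePoints (k : ℕ) : IsGoodConfig 1 k framePoints := by
  classical
  refine ⟨fun w hw => ?_, fun P hP hPv => ?_⟩
  · have hdiag : ∀ a, w (some a) a = 0 := by
      intro a
      simpa [framePoints, Pi.single_apply] using hw (some a)
    let A : Fin 4 → Fin 4 → MvPolynomial (Fin 4) ℂ := fun i j =>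
      C (w (some j) i) * X j - C (w (some i) j) * X i
    let r : Fin 4 → ℂ := fun i => w none i - ∑ j, (w (some j) i - w (some i) j)
    let g : Fin 4 → MvPolynomial (Fin 4) ℂ := ![0, C (r 1) * X 2, C (r 2) * X 3, C (r 3) * X 1]
    let B : Fin 4 → Fin 4 → MvPolynomial (Fin 4) ℂ := fun i j =>
      (if j = 0 then g i else 0) - if i = 0 then g j else 0
    have hg : ∀ i, (g i).IsHomogeneous 1 := by
      intro i
      fin_cases i
      · exact isHomogeneous_zero _ _ _
      all_goals exact (isHomogeneous_X _ _).C_mul _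
    let F : Fin 4 → MvPolynomial (Fin 4) ℂ := fun i => ∑ j, (A i j + B i j) * X j
    have hF : F ∈ koszulSections 4 1 := by
      refine ⟨fun i j => A i j + B i j, fun i j => ?_, fun i j => ?_, fun i => rfl⟩
      · refine IsHomogeneous.add (((isHomogeneous_X _ _).C_mul _).sub
          ((isHomogeneous_X _ _).C_mul _)) (IsHomogeneous.sub ?_ ?_)
        · split_ifs
          · exact hg i
          · exact isHomogeneous_zero _ _ _
        · split_ifs
          · exact hg j
          · exact isHomogeneous_zero _ _ _
      · simp only [A, B]
        ring
    refine ⟨F, hF, ?_⟩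
    rintro (_ | a)
    · refine eq_of_sum_mul_eq_of_forall_ne (j := 0) (v := framePoints none) one_ne_zero ?_ ?_
      · exact (sum_mul_eval_of_mem_koszulSections hF _).trans (hw none).symm
      · intro i hi
        have h1 : eval (framePoints none) (F i) =
            ∑ j, (w (some j) i - w (some i) j) + eval (framePoints none) (g i) := by
          simp only [F, A, B, hi, framePoints, Finset.sum_add_distrib, map_sum, map_mul, map_add,
            map_sub, eval_X, eval_C, mul_one, if_false, sub_zero, add_mul]
          rw [Finset.sum_eq_single (a := (0 : Fin 4))
            (f := fun j => eval _ (if j = 0 then g i else 0))]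
          · simp
          · intro j _ hj
            simp [hj]
          · simp
        have h2 : eval (framePoints none) (g i) = r i := by
          fin_cases i
          · exact absurd rfl hi
          all_goals simp [g, framePoints]
        rw [h1, h2]
        simp only [r]
        ring
    · intro i
      have h1 : eval (framePoints (some a)) (F i) = eval (framePoints (some a)) (A i a) +
          eval (framePoints (some a)) (B i a) := by
        simp [F, framePoints, Pi.single_apply]
      have h2 : eval (framePoints (some a)) (A i a) = w (some a) i := by
        by_cases hia : i = a
        · subst hia
          simp [A, hdiag]
        · simp [A, framePoints, hia]
      have h3 : eval (framePoints (some a)) (B i a) = 0 := by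
        have h4 : ∀ i, eval (framePoints (some i)) (g i) = 0 := by
          intro i
          fin_cases i <;> simp [g, framePoints]
        have h5 : ∀ i, eval (framePoints (some 0)) (g i) = 0 := by
          intro i
          fin_cases i <;> simp [g, framePoints]
        simp only [B, map_sub]
        by_cases ha : a = 0
        · subst ha
          split_ifs <;> simp [h5]
        · split_ifs <;> simp [h4]
      rw [h1, h2, h3, add_zero]
  · have hdec : ∃ u ∈ productSpan 1 k framePoints, ∃ (c : Fin 4 → ℂ) (b : ℂ),
        P = u + ∑ i, C (c i) * X i ^ (k + 2) + C b * (X 0 ^ k * (X 0 * X 1)) := by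
      obtain ⟨u, hu, w, hw, rfl⟩ := Submodule.mem_sup.mp (mem_span_frame (d := k + 2) hP)
      suffices ∃ (c : Fin 4 → ℂ) (b : ℂ),
          w = ∑ i, C (c i) * X i ^ (k + 2) + C b * (X 0 ^ k * (X 0 * X 1)) by
        obtain ⟨c, b, rfl⟩ := this
        exact ⟨u, frameIdeal_le_productSpan k hu, c, b, by ring⟩
      refine Submodule.span_induction ?_ ?_ ?_ ?_ hw
      · rintro _ (⟨i, rfl⟩ | ⟨e, he, rfl⟩)
        · refine ⟨Pi.single i 1, 0, ?_⟩
          rw [Finset.sum_eq_single i]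
          · simp
          · intro j _ hj
            simp [Pi.single_eq_of_ne hj]
          · simp
        · obtain rfl : e = k := by omega
          exact ⟨0, 1, by simp⟩
      · exact ⟨0, 0, by simp⟩
      · rintro x y _ _ ⟨c, b, rfl⟩ ⟨c', b', rfl⟩
        refine ⟨c + c', b + b', ?_⟩
        simp only [Pi.add_apply, C_add, add_mul, Finset.sum_add_distrib]
        ring
      · rintro a x _ ⟨c, b, rfl⟩
        refine ⟨a • c, a * b, ?_⟩
        simp [smul_eq_C_mul, Finset.mul_sum, mul_assoc]
    obtain ⟨u, hu, c, b, rfl⟩ := hdec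
    have hc : ∀ a, c a = 0 := by
      intro a
      have h1 := hPv (some a)
      have h2 : ((Pi.single a 1 : Fin 4 → ℂ) 0) * (Pi.single a 1 : Fin 4 → ℂ) 1 = 0 := by
        fin_cases a <;> simp
      have h3 : ∑ i, c i * (Pi.single a 1 : Fin 4 → ℂ) i ^ (k + 2) = c a := by
        rw [Finset.sum_eq_single a]
        · simp
        · intro i _ hi
          simp [Pi.single_eq_of_ne hi]
        · simp
      rw [map_add, map_add, eval_eq_zero_of_mem_productSpan hu (some a)] at h1
      simp only [map_sum, map_mul, map_pow, eval_C, eval_X, framePoints, h2, h3,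
        mul_zero, add_zero, zero_add] at h1
      exact h1
    have hb : b = 0 := by
      have h1 := hPv none
      rw [map_add, map_add, eval_eq_zero_of_mem_productSpan hu none] at h1
      simpa [hc, framePoints] using h1
    simpa [hc, hb] using hu

theorem eval_smul_of_isHomogeneous {σ : Type*} {m : ℕ} {p : MvPolynomial σ ℂ}
    (hp : p.IsHomogeneous m) (c : ℂ) (v : σ → ℂ) : eval (c • v) p = c ^ m * eval v p := by
  rw [eval_eq, eval_eq, Finset.mul_sum]
  refine Finset.sum_congr rfl fun d hd => ?_
  have hdeg : ∑ i ∈ d.support, d i = m := by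
    rw [← hp (mem_support_iff.mp hd), Finsupp.weight_apply]
    simp [Finsupp.sum]
  simp only [Pi.smul_apply, smul_eq_mul, mul_pow, Finset.prod_mul_distrib,
    Finset.prod_pow_eq_pow_sum, hdeg]
  ring

/-- The pair `{i, j}` as an index of a component of a tensor with values in `Λ²ℂ⁴`. -/
def indexPair (i j : Fin 4) (h : i < j) : {S : Finset (Fin 4) // S.card = 2} :=
  ⟨{i, j}, Finset.card_pair h.ne⟩

/-- The skew-symmetric matrix of forms attached to a tensor with values in `Λ²ℂ⁴` through the
pairing `Λ²ℂ⁴ × Λ²ℂ⁴ → Λ⁴ℂ⁴`. -/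
noncomputable def dualMatrix (q : {S : Finset (Fin 4) // S.card = 2} → MvPolynomial (Fin 4) ℂ) :
    Fin 4 → Fin 4 → MvPolynomial (Fin 4) ℂ :=
  ![![0, -q (indexPair 2 3 (by decide)), q (indexPair 1 3 (by decide)),
      -q (indexPair 1 2 (by decide))],
    ![q (indexPair 2 3 (by decide)), 0, -q (indexPair 0 3 (by decide)),
      q (indexPair 0 2 (by decide))],
    ![-q (indexPair 1 3 (by decide)), q (indexPair 0 3 (by decide)), 0,
      -q (indexPair 0 1 (by decide))],
    ![q (indexPair 1 2 (by decide)), -q (indexPair 0 2 (by decide)),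
      q (indexPair 0 1 (by decide)), 0]]

theorem univ_indexPair : (Finset.univ : Finset {S : Finset (Fin 4) // S.card = 2}) =
    {indexPair 0 1 (by decide), indexPair 0 2 (by decide), indexPair 0 3 (by decide),
      indexPair 1 2 (by decide), indexPair 1 3 (by decide), indexPair 2 3 (by decide)} := by
  decide

theorem eWedge_indexPair {i j : Fin 4} (h : i < j) :
    eWedge 4 (indexPair i j h).1 = ι ℂ (Pi.single i (1 : ℂ)) * ι ℂ (Pi.single j (1 : ℂ)) := by
  have : (({i, j} : Finset (Fin 4)).sort (· ≤ ·)) = [i, j] := by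
    rw [Finset.sort_insert _ (by simpa using h.le) (by simpa using h.ne), Finset.sort_singleton]
  simp [eWedge, indexPair, this]

/-- The vector of forms whose vanishing at `v` says that `v` is an eigenvector of `q`. -/
noncomputable def dualSection (q : {S : Finset (Fin 4) // S.card = 2} → MvPolynomial (Fin 4) ℂ)
    (i : Fin 4) : MvPolynomial (Fin 4) ℂ :=
  ∑ j, dualMatrix q i j * X j

theorem dualSection_mem_koszulSections {m : ℕ}
    {q : {S : Finset (Fin 4) // S.card = 2} → MvPolynomial (Fin 4) ℂ}
    (hq : ∀ S, (q S).IsHomogeneous m) : dualSection q ∈ koszulSections 4 m := by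
  refine ⟨dualMatrix q, fun i j => ?_, fun i j => ?_, fun i => rfl⟩
  · fin_cases i <;> fin_cases j <;>
      first | exact isHomogeneous_zero _ _ _ | exact hq _ | exact (hq _).neg
  · fin_cases i <;> fin_cases j <;> simp [dualMatrix]

theorem exists_dualMatrix_eq {m : ℕ} {A : Fin 4 → Fin 4 → MvPolynomial (Fin 4) ℂ}
    (hA : ∀ i j, (A i j).IsHomogeneous m) (hskew : ∀ i j, A j i = -A i j) :
    ∃ q : {S : Finset (Fin 4) // S.card = 2} → MvPolynomial (Fin 4) ℂ,
      (∀ S, (q S).IsHomogeneous m) ∧ dualMatrix q = A := by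
  let q : {S : Finset (Fin 4) // S.card = 2} → MvPolynomial (Fin 4) ℂ := fun S =>
    if S = indexPair 0 1 (by decide) then A 3 2 else
    if S = indexPair 0 2 (by decide) then A 1 3 else
    if S = indexPair 0 3 (by decide) then A 2 1 else
    if S = indexPair 1 2 (by decide) then A 3 0 else
    if S = indexPair 1 3 (by decide) then A 0 2 else A 1 0
  have hdiag : ∀ i, A i i = 0 := fun i => self_eq_neg.mp (hskew i i)
  refine ⟨q, fun S => ?_, ?_⟩
  · simp only [q]
    split_ifs <;> exact hA _ _
  · have h01 : q (indexPair 0 1 (by decide)) = A 3 2 := rfl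
    have h02 : q (indexPair 0 2 (by decide)) = A 1 3 := rfl
    have h03 : q (indexPair 0 3 (by decide)) = A 2 1 := rfl
    have h12 : q (indexPair 1 2 (by decide)) = A 3 0 := rfl
    have h13 : q (indexPair 1 3 (by decide)) = A 0 2 := rfl
    have h23 : q (indexPair 2 3 (by decide)) = A 1 0 := rfl
    funext i j
    rw [dualMatrix, h01, h02, h03, h12, h13, h23]
    fin_cases i <;> fin_cases j <;>
      first | exact (hdiag _).symm | rfl | exact (hskew _ _).symm

theorem ι_mul_ι_mul_self {M : Type*} [AddCommGroup M] [Module ℂ M] (a b : M) :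
    ι ℂ a * ι ℂ b * ι ℂ b = 0 := by
  rw [mul_assoc, ι_sq_zero, mul_zero]

theorem ι_mul_ι_mul_swap {M : Type*} [AddCommGroup M] [Module ℂ M] (a b c : M) :
    ι ℂ a * ι ℂ c * ι ℂ b = -(ι ℂ a * ι ℂ b * ι ℂ c) := by
  rw [mul_assoc, mul_assoc, eq_neg_of_add_eq_zero_left (ι_add_mul_swap c b), mul_neg]

theorem ι_mul_ι_mul_rotate {M : Type*} [AddCommGroup M] [Module ℂ M] (a b c : M) :
    ι ℂ b * ι ℂ c * ι ℂ a = ι ℂ a * ι ℂ b * ι ℂ c := by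
  rw [ι_mul_ι_mul_swap, eq_neg_of_add_eq_zero_left (ι_add_mul_swap b a), neg_mul, neg_neg]

theorem ι_mul_ι_mul_first {M : Type*} [AddCommGroup M] [Module ℂ M] (a b : M) :
    ι ℂ a * ι ℂ b * ι ℂ a = 0 := by
  rw [ι_mul_ι_mul_rotate, ι_sq_zero, zero_mul]

theorem tval_mul_ι (q : {S : Finset (Fin 4) // S.card = 2} → MvPolynomial (Fin 4) ℂ)
    (v : Fin 4 → ℂ) :
    tval 4 2 q v * ι ℂ v =
      eval v (dualSection q 3) •
          (ι ℂ (Pi.single 0 (1 : ℂ)) * ι ℂ (Pi.single 1 (1 : ℂ)) * ι ℂ (Pi.single 2 (1 : ℂ))) -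
        eval v (dualSection q 2) •
          (ι ℂ (Pi.single 0 (1 : ℂ)) * ι ℂ (Pi.single 1 (1 : ℂ)) * ι ℂ (Pi.single 3 (1 : ℂ))) +
        eval v (dualSection q 1) •
          (ι ℂ (Pi.single 0 (1 : ℂ)) * ι ℂ (Pi.single 2 (1 : ℂ)) * ι ℂ (Pi.single 3 (1 : ℂ))) -
        eval v (dualSection q 0) •
          (ι ℂ (Pi.single 1 (1 : ℂ)) * ι ℂ (Pi.single 2 (1 : ℂ)) * ι ℂ (Pi.single 3 (1 : ℂ))) := by
  have hv : ι ℂ v = v 0 • ι ℂ (Pi.single 0 (1 : ℂ)) + v 1 • ι ℂ (Pi.single 1 (1 : ℂ)) +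
      v 2 • ι ℂ (Pi.single 2 (1 : ℂ)) + v 3 • ι ℂ (Pi.single 3 (1 : ℂ)) := by
    rw [← Fin.sum_univ_four (fun i => v i • ι ℂ (Pi.single i (1 : ℂ)))]
    simp only [← map_smul, ← map_sum]
    congr 1
    exact pi_eq_sum_univ' v
  have hw : tval 4 2 q v =
      eval v (q (indexPair 0 1 (by decide))) •
        (ι ℂ (Pi.single 0 (1 : ℂ)) * ι ℂ (Pi.single 1 (1 : ℂ))) +
      (eval v (q (indexPair 0 2 (by decide))) •
        (ι ℂ (Pi.single 0 (1 : ℂ)) * ι ℂ (Pi.single 2 (1 : ℂ))) +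
      (eval v (q (indexPair 0 3 (by decide))) •
        (ι ℂ (Pi.single 0 (1 : ℂ)) * ι ℂ (Pi.single 3 (1 : ℂ))) +
      (eval v (q (indexPair 1 2 (by decide))) •
        (ι ℂ (Pi.single 1 (1 : ℂ)) * ι ℂ (Pi.single 2 (1 : ℂ))) +
      (eval v (q (indexPair 1 3 (by decide))) •
        (ι ℂ (Pi.single 1 (1 : ℂ)) * ι ℂ (Pi.single 3 (1 : ℂ))) +
      eval v (q (indexPair 2 3 (by decide))) •
        (ι ℂ (Pi.single 2 (1 : ℂ)) * ι ℂ (Pi.single 3 (1 : ℂ))))))) := by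
    simp only [tval, univ_indexPair]
    rw [Finset.sum_insert (by decide), Finset.sum_insert (by decide),
      Finset.sum_insert (by decide), Finset.sum_insert (by decide),
      Finset.sum_insert (by decide), Finset.sum_singleton]
    simp only [eWedge_indexPair]
  rw [hw, hv]
  simp only [dualSection, dualMatrix, Fin.sum_univ_four, map_add, map_mul, eval_X]
  generalize (Pi.single 0 1 : Fin 4 → ℂ) = a
  generalize (Pi.single 1 1 : Fin 4 → ℂ) = b
  generalize (Pi.single 2 1 : Fin 4 → ℂ) = c
  generalize (Pi.single 3 1 : Fin 4 → ℂ) = d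
  simp only [mul_add, add_mul, smul_mul_smul_comm, ι_mul_ι_mul_self, ι_mul_ι_mul_first,
    ι_mul_ι_mul_swap a b c, ι_mul_ι_mul_swap a b d, ι_mul_ι_mul_swap a c d,
    ι_mul_ι_mul_swap b c d, ι_mul_ι_mul_rotate a b c, ι_mul_ι_mul_rotate a b d,
    ι_mul_ι_mul_rotate a c d, ι_mul_ι_mul_rotate b c d]
  simp only [smul_zero, zero_add, smul_neg, add_zero, Matrix.cons_val', Matrix.cons_val_zero,
    Matrix.cons_val_fin_one, Matrix.cons_val, Matrix.cons_val_one, map_neg, neg_mul, map_zero,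
    zero_mul]
  module

/-- The linear form on the exterior algebra of `ℂ⁴` given by the determinant in degree four. -/
noncomputable def detForm : ExteriorAlgebra ℂ (Fin 4 → ℂ) →ₗ[ℂ] ℂ :=
  liftAlternating (Function.update 0 4 Matrix.detRowAlternating)

theorem detForm_mul_mul_mul (a b c d : Fin 4 → ℂ) :
    detForm (ι ℂ a * ι ℂ b * ι ℂ c * ι ℂ d) = Matrix.det (Matrix.of ![a, b, c, d]) := by
  have h : ι ℂ a * ι ℂ b * ι ℂ c * ι ℂ d = ιMulti ℂ 4 ![a, b, c, d] := by
    simp [ιMulti_apply, mul_assoc]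
  rw [h, detForm, liftAlternating_apply_ιMulti, Function.update_self]
  rfl

theorem tval_mul_ι_eq_zero_iff (q : {S : Finset (Fin 4) // S.card = 2} → MvPolynomial (Fin 4) ℂ)
    (v : Fin 4 → ℂ) :
    tval 4 2 q v * ι ℂ v = 0 ↔ ∀ i, eval v (dualSection q i) = 0 := by
  refine ⟨fun h i => ?_, fun h => ?_⟩
  · have key := congrArg (fun x => detForm (x * ι ℂ (Pi.single i (1 : ℂ)))) (tval_mul_ι q v)
    simp only [h, zero_mul, map_zero, sub_mul, add_mul, smul_mul_assoc, map_sub, map_add, map_smul,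
      detForm_mul_mul_mul] at key
    fin_cases i <;>
      simpa [Matrix.det_succ_row_zero, Fin.sum_univ_succ, Fin.succAbove] using key.symm
  · simp [tval_mul_ι, h]

theorem exists_mul_sub_mul_ne_zero {N : ℕ} {v u : Fin N → ℂ} (hv : v ≠ 0)
    (h : ∀ c : ℂ, u ≠ c • v) : ∃ a b, v a * u b - v b * u a ≠ 0 := by
  obtain ⟨a, ha⟩ := Function.ne_iff.mp hv
  by_contra! hab
  refine h (u a / v a) (funext fun b => ?_)
  have hb := hab a b
  have ha' : v a ≠ 0 := ha
  simp only [Pi.smul_apply, smul_eq_mul]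
  field_simp
  linear_combination hb

/-- The sections vanishing at a good configuration have no further common zeros. -/
theorem IsGoodConfig.exists_section_eval_ne_zero {s N m : ℕ} {v : Fin s → Fin N → ℂ}
    (h : IsGoodConfig m s v) (hv : ∀ i, v i ≠ 0) {u : Fin N → ℂ} (hu : u ≠ 0)
    (huv : ∀ i, ∀ c : ℂ, u ≠ c • v i) : ∃ F ∈ vanishingSections m v, ∃ j, eval u (F j) ≠ 0 := by
  choose a b hab using fun i => exists_mul_sub_mul_ne_zero (hv i) (huv i)
  obtain ⟨c, hc⟩ := Function.ne_iff.mp hu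
  let P : MvPolynomial (Fin N) ℂ :=
    (∏ i, (C (v i (a i)) * X (b i) - C (v i (b i)) * X (a i))) * X c ^ (m + 1)
  have hP : P.IsHomogeneous (s + m + 1) := by
    have h1 := IsHomogeneous.prod Finset.univ
      (fun i => C (v i (a i)) * X (b i) - C (v i (b i)) * X (a i)) (fun _ => 1)
      (fun i _ => ((isHomogeneous_X ℂ (b i)).C_mul _).sub ((isHomogeneous_X ℂ (a i)).C_mul _))
    have h2 := h1.mul ((isHomogeneous_X ℂ c).pow (m + 1))
    simpa [add_assoc] using h2
  have hPv : ∀ i, eval (v i) P = 0 := by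
    intro i
    simp only [P, map_mul, map_prod]
    rw [Finset.prod_eq_zero (Finset.mem_univ i), zero_mul]
    simp [mul_comm]
  have hPu : eval u P ≠ 0 := by
    simp only [P, map_mul, map_prod, map_pow, map_sub, eval_C, eval_X]
    exact mul_ne_zero (Finset.prod_ne_zero_iff.mpr fun i _ => hab i) (pow_ne_zero _ hc)
  by_contra! hF
  refine hPu (Submodule.span_induction ?_ ?_ ?_ ?_ (h.gen P hP hPv))
  · rintro _ ⟨p, -, F, hFm, j, rfl⟩
    rw [map_mul, hF F hFm j, mul_zero]
  · exact map_zero _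
  · intro x y _ _ hx hy
    rw [map_add, hx, hy, add_zero]
  · intro t x _ hx
    rw [smul_eval, hx, mul_zero]

theorem exists_isGoodConfig_fin {m s : ℕ}
    (hms : (2 ≤ m ∧ 3 * s + m * (m + 1) / 2 + 8 ≤ (m + 4) * (m + 3) * (m + 1) / 2) ∨
      (m = 1 ∧ s ≤ 5)) (k : ℕ) : ∃ v : Fin s → Fin 4 → ℂ, IsGoodConfig m k v := by
  rcases hms with ⟨hm, hs⟩ | ⟨rfl, hs⟩
  · obtain ⟨v, hv⟩ := exists_isGoodConfig_space hm k
    obtain ⟨f, hf⟩ := exists_injective_space hm hs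
    have := finite_subtype_sum_eq 3 m
    have := Fintype.ofFinite {α : Fin 3 → ℕ // ∑ j, α j = m}
    exact ⟨v ∘ f, hv.comp (by omega) hf⟩
  · obtain ⟨f⟩ := Function.Embedding.nonempty_of_card_le
      (α := Fin s) (β := Option (Fin 4)) (by simpa using hs)
    exact ⟨framePoints ∘ f, (isGoodConfig_framePoints k).comp (by omega) f.injective⟩

/-- Theorem 5.3(iv) (`ℙ³`, bundle `Q*(m+1)`): if `m ≥ 2` and
`3s ≤ (m+4)(m+3)(m+1)/2 − m²/2 − m/2 − 8` (or `m = 1` and `s ≤ 5`), then for a general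
tuple of nonzero vectors `v_1,…,v_s ∈ ℂ⁴`, the common eigenvectors of all tensors
`M ∈ Hom(S^mℂ⁴, Λ²ℂ⁴)` (represented by six homogeneous degree-`m` component polynomials
`(q_S)_{|S|=2}`) satisfying `M(v_i^m) ∧ v_i = 0` for all `i` are exactly the nonzero
scalar multiples of the `v_i`.  (Note `m²/2 + m/2 = m(m+1)/2`, so the bound is written
subtraction-free as `3s + m(m+1)/2 + 8 ≤ (m+4)(m+3)(m+1)/2`.) -/
theorem statement16 (m s : ℕ)
    (hms : (2 ≤ m ∧ 3 * s + m * (m + 1) / 2 + 8 ≤ (m + 4) * (m + 3) * (m + 1) / 2) ∨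
      (m = 1 ∧ s ≤ 5)) :
    ∃ D : MvPolynomial (Fin s × Fin 4) ℂ, D ≠ 0 ∧
      ∀ v : Fin s → Fin 4 → ℂ, (∀ i, v i ≠ 0) →
        MvPolynomial.eval (fun t => v t.1 t.2) D ≠ 0 →
        ∀ u : Fin 4 → ℂ, u ≠ 0 →
          ((∀ q : {S : Finset (Fin 4) // S.card = 2} → MvPolynomial (Fin 4) ℂ,
              (∀ S, (q S).IsHomogeneous m) →
              (∀ i, tval 4 2 q (v i) * ExteriorAlgebra.ι ℂ (v i) = 0) →
              tval 4 2 q u * ExteriorAlgebra.ι ℂ u = 0) ↔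
            ∃ i, ∃ lam : ℂ, u = lam • v i) := by
  obtain ⟨v₀, hv₀⟩ := exists_isGoodConfig_fin hms s
  obtain ⟨D, hD, hgood⟩ := hv₀.exists_open (by omega)
  refine ⟨D, fun h0 => hD (by rw [h0, map_zero]), fun v hv hDv u hu => ⟨fun h => ?_, ?_⟩⟩
  · by_contra! huv
    obtain ⟨F, ⟨⟨A, hA, hskew, hFA⟩, hFv⟩, j, hj⟩ :=
      (hgood v hDv).exists_section_eval_ne_zero hv hu huv
    obtain ⟨q, hq, rfl⟩ := exists_dualMatrix_eq hA hskew
    obtain rfl : F = dualSection q := funext hFA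
    exact hj ((tval_mul_ι_eq_zero_iff q u).mp
      (h q hq fun i => (tval_mul_ι_eq_zero_iff q (v i)).mpr (hFv i)) j)
  · rintro ⟨i, c, rfl⟩ q hq h
    rw [tval_mul_ι_eq_zero_iff]
    intro j
    rw [eval_smul_of_isHomogeneous
      (isHomogeneous_of_mem_koszulSections (dualSection_mem_koszulSections hq) j),
      (tval_mul_ι_eq_zero_iff q (v i)).mp (h i) j, mul_zero]
end

section
/- (Sylvester Pentahedral Theorem) For a general homogeneous cubic f ∈ ℂ[x_0,x_1,x_2,x_3] (i.e., off the zero set of some nonzero polynomial in its 20 coefficients), there exist nonzero vectors v_1,…,v_5 ∈ ℂ⁴ and scalars c_1,…,c_5 ∈ ℂ such that f = Σ_{i=1}^5 c_i ℓ_{v_i}³, and this decomposition is unique up to permutation and scaling: if also f = Σ_{i=1}^5 c_i' ℓ_{w_i}³ with all c_i' ≠ 0 and w_i ≠ 0, then there is a permutation σ of {1,…,5} and nonzero λ_i ∈ ℂ with w_i = λ_i v_{σ(i)} and c_i' λ_i³ = c_{σ(i)}. -/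
open MvPolynomial

/-- The linear form `ℓ_v = Σ_j v_j x_j` associated to a vector `v ∈ ℂ^k`. -/
noncomputable def linForm (k : ℕ) (v : Fin k → ℂ) : MvPolynomial (Fin k) ℂ :=
  ∑ j, MvPolynomial.C (v j) * MvPolynomial.X j

section GeneralPosition

open Module

variable {K V : Type*} [Field K] [AddCommGroup V] [Module K V] {v w : Fin 5 → V} {c c' : Fin 5 → K}

/-- Any four of the five vectors `v i` are linearly independent. -/
def InGeneralPosition (K : Type*) {V : Type*} [Field K] [AddCommGroup V] [Module K V]
    (v : Fin 5 → V) : Prop :=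
  ∀ i : Fin 5, LinearIndependent K fun a : Fin 4 => v (i.succAbove a)

theorem InGeneralPosition.eq_zero_of_sum_smul_eq_zero (hv : InGeneralPosition K v)
    {a : Fin 5 → K} {i : Fin 5} (hi : a i = 0) (h : ∑ k, a k • v k = 0) : a = 0 := by
  rw [Fin.sum_univ_succAbove _ i, hi, zero_smul, zero_add] at h
  have := Fintype.linearIndependent_iff.1 (hv i) (fun b => a (i.succAbove b)) h
  ext k
  rcases Fin.eq_self_or_eq_succAbove i k with rfl | ⟨b, rfl⟩
  · exact hi
  · exact this b

theorem InGeneralPosition.exists_ne_apply_ne_zero [FiniteDimensional K V] (hV : finrank K V = 4)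
    (hv : InGeneralPosition K v) {x : Dual K V} (hx : x ≠ 0) (i : Fin 5) :
    ∃ j, j ≠ i ∧ x (v j) ≠ 0 := by
  by_contra! h
  refine hx (LinearMap.ext_on_range ((hv i).span_eq_top_of_card_eq_finrank' (by simp [hV])) ?_)
  intro a
  simpa using h _ (Fin.succAbove_ne i a)

theorem InGeneralPosition.exists_pair_apply_ne_zero [FiniteDimensional K V] (hV : finrank K V = 4)
    (hv : InGeneralPosition K v) {x : Dual K V} (hx : x ≠ 0) :
    ∃ a b, a ≠ b ∧ x (v a) ≠ 0 ∧ x (v b) ≠ 0 := by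
  obtain ⟨a, -, ha⟩ := hv.exists_ne_apply_ne_zero hV hx 0
  obtain ⟨b, hb, hb'⟩ := hv.exists_ne_apply_ne_zero hV hx a
  exact ⟨a, b, hb.symm, ha, hb'⟩

theorem InGeneralPosition.linearIndependent_pair (hv : InGeneralPosition K v) {a b : Fin 5}
    (hab : a ≠ b) : LinearIndependent K ![v a, v b] := by
  obtain ⟨i, hia, hib⟩ : ∃ i : Fin 5, i ≠ a ∧ i ≠ b := by decide +revert
  rw [LinearIndependent.pair_iff]
  intro s t h
  have := hv.eq_zero_of_sum_smul_eq_zero (a := Pi.single a s + Pi.single b t) (i := i)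
    (by simp [hia, hib]) (by simpa [add_smul, Finset.sum_add_distrib, Pi.single_apply] using h)
  have ha := congrFun this a
  have hb := congrFun this b
  simp [hab, hab.symm] at ha hb
  exact ⟨ha, hb⟩

theorem exists_dual_ne_zero_of_three [FiniteDimensional K V] (hV : finrank K V = 4)
    (u₁ u₂ u₃ : V) : ∃ x : Dual K V, x ≠ 0 ∧ x u₁ = 0 ∧ x u₂ = 0 ∧ x u₃ = 0 := by
  have hlt : Submodule.span K (Set.range ![u₁, u₂, u₃]) < ⊤ := by
    refine lt_top_iff_ne_top.2 fun h => ?_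
    have := finrank_range_le_card (R := K) ![u₁, u₂, u₃]
    rw [Set.finrank, h, finrank_top, hV] at this
    simp at this
  obtain ⟨x, hx, hle⟩ := Submodule.exists_le_ker_of_lt_top _ hlt
  refine ⟨x, hx, ?_, ?_, ?_⟩
  · exact hle (Submodule.subset_span ⟨0, rfl⟩)
  · exact hle (Submodule.subset_span ⟨1, rfl⟩)
  · exact hle (Submodule.subset_span ⟨2, rfl⟩)

/-- If `∑ c i • v i ^ ⊗ 3 = ∑ c' i • w i ^ ⊗ 3` with the `v i` in general position, and a nonzero
functional `x` vanishes on every `w k` except possibly `w i` and `w j`, then two of the `v k` span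
the plane of `w i` and `w j`. -/
theorem InGeneralPosition.exists_pair_span_eq [FiniteDimensional K V] (hV : finrank K V = 4)
    (hv : InGeneralPosition K v) (hc : ∀ i, c i ≠ 0)
    (h : ∀ x y z : Dual K V, ∑ i, c i * (x (v i) * y (v i) * z (v i)) =
      ∑ i, c' i * (x (w i) * y (w i) * z (w i)))
    {x : Dual K V} (hx : x ≠ 0) {i j : Fin 5} (hxw : ∀ k, k ≠ i → k ≠ j → x (w k) = 0) :
    ∃ a b, a ≠ b ∧ Submodule.span K {v a, v b} = Submodule.span K {w i, w j} := by
  have key (y : Dual K V) (hyi : y (w i) = 0) (hyj : y (w j) = 0) :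
      ∑ k, (c k * (x (v k) * y (v k))) • v k = 0 := by
    rw [← Module.forall_dual_apply_eq_zero_iff K]
    intro z
    have hxy : ∀ k, x (w k) * y (w k) = 0 := by
      intro k
      by_cases hki : k = i
      · rw [hki, hyi, mul_zero]
      by_cases hkj : k = j
      · rw [hkj, hyj, mul_zero]
      rw [hxw k hki hkj, zero_mul]
    simpa [hxy, mul_assoc] using h x y z
  obtain ⟨y, hy, hyi, hyj, hy0⟩ := exists_dual_ne_zero_of_three hV (w i) (w j) (v 0)
  have hprod := hv.eq_zero_of_sum_smul_eq_zero (i := 0) (by simp [hy0]) (key y hyi hyj)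
  obtain ⟨m, -, hm⟩ := hv.exists_ne_apply_ne_zero hV hy 0
  have hxm : x (v m) = 0 := by simpa [hc, hm] using congrFun hprod m
  have hmem : ∀ k, x (v k) ≠ 0 → v k ∈ Submodule.span K {w i, w j} := by
    intro k hk
    by_contra hmem
    obtain ⟨z, hz, hle⟩ := Submodule.exists_le_ker_of_notMem hmem
    have hzi : z (w i) = 0 := hle (Submodule.subset_span (by simp))
    have hzj : z (w j) = 0 := hle (Submodule.subset_span (by simp))
    have := congrFun (hv.eq_zero_of_sum_smul_eq_zero (i := m) (by simp [hxm]) (key z hzi hzj)) k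
    simp [hc, hk, hz] at this
  obtain ⟨a, b, hab, ha, hb⟩ := hv.exists_pair_apply_ne_zero hV hx
  refine ⟨a, b, hab, Submodule.eq_of_le_of_finrank_le ?_ ?_⟩
  · rw [Submodule.span_le]
    rintro _ (rfl | rfl)
    exacts [hmem a ha, hmem b hb]
  · have h₂ := finrank_span_eq_card (hv.linearIndependent_pair hab)
    have h₁ := finrank_range_le_card (R := K) ![w i, w j]
    have hrange (p q : V) : Set.range ![p, q] = {p, q} := by simp [Set.pair_comm]
    rw [hrange, Fintype.card_fin] at h₂
    rw [Set.finrank, hrange, Fintype.card_fin] at h₁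
    rwa [h₂]

theorem InGeneralPosition.not_span_pair_le_span_singleton (hv : InGeneralPosition K v)
    {a b : Fin 5} (hab : a ≠ b) (u : V) :
    ¬ Submodule.span K {v a, v b} ≤ Submodule.span K {u} := by
  intro hle
  obtain ⟨s, hs⟩ := Submodule.mem_span_singleton.1 (hle (Submodule.subset_span (by simp : v a ∈ _)))
  obtain ⟨t, ht⟩ := Submodule.mem_span_singleton.1 (hle (Submodule.subset_span (by simp : v b ∈ _)))
  have hpair := hv.linearIndependent_pair hab
  obtain ⟨ht0, -⟩ := LinearIndependent.pair_iff.1 hpair t (-s) (by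
    rw [← hs, ← ht, smul_smul, smul_smul, ← add_smul]
    simp [mul_comm])
  exact hpair.ne_zero 1 (by simp [← ht, ht0])

theorem InGeneralPosition.exists_eq_smul_of_mem_span_pair (hv : InGeneralPosition K v)
    {a b d e : Fin 5} (hab : a ≠ b)
    (hne : Submodule.span K {v a, v b} ≠ Submodule.span K {v d, v e}) {u : V}
    (hu : u ∈ Submodule.span K {v a, v b}) (hu' : u ∈ Submodule.span K {v d, v e}) :
    ∃ k, ∃ t : K, u = t • v k := by
  obtain ⟨s, t, rfl⟩ := Submodule.mem_span_pair.1 hu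
  obtain ⟨s', t', h⟩ := Submodule.mem_span_pair.1 hu'
  by_cases hs : s = 0
  · exact ⟨b, t, by simp [hs]⟩
  by_cases ht : t = 0
  · exact ⟨a, s, by simp [ht]⟩
  exfalso
  obtain ⟨i, hia, hib, hid, hie⟩ : ∃ i : Fin 5, i ≠ a ∧ i ≠ b ∧ i ≠ d ∧ i ≠ e := by
    clear hne hu hu' h
    decide +revert
  have hzero := hv.eq_zero_of_sum_smul_eq_zero
    (a := Pi.single a s + Pi.single b t - (Pi.single d s' + Pi.single e t')) (i := i)
    (by simp [hia, hib, hid, hie])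
    (by simpa [add_smul, sub_smul, Finset.sum_add_distrib, Finset.sum_sub_distrib,
      Pi.single_apply, sub_eq_zero] using h.symm)
  have ha : a = d ∨ a = e := by
    by_contra! hcon
    have := congrFun hzero a
    simp [hab, hcon.1, hcon.2, hs] at this
  have hb : b = d ∨ b = e := by
    by_contra! hcon
    have := congrFun hzero b
    simp [hab.symm, hcon.1, hcon.2, ht] at this
  rcases ha with rfl | rfl <;> rcases hb with rfl | rfl
  · exact hab rfl
  · exact hne rfl
  · exact hne (by rw [Set.pair_comm])
  · exact hab rfl

/-- **Kruskal uniqueness** for five vectors in general position in a four-dimensional space. -/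
theorem InGeneralPosition.exists_perm_of_sum_cube_eq [FiniteDimensional K V]
    (hV : finrank K V = 4) (hv : InGeneralPosition K v) (hc : ∀ i, c i ≠ 0) (hw : ∀ i, w i ≠ 0)
    (h : ∀ x y z : Dual K V, ∑ i, c i * (x (v i) * y (v i) * z (v i)) =
      ∑ i, c' i * (x (w i) * y (w i) * z (w i))) :
    ∃ (σ : Equiv.Perm (Fin 5)) (lam : Fin 5 → K), (∀ i, lam i ≠ 0) ∧
      (∀ i, w i = lam i • v (σ i)) ∧ ∀ i, c' i * lam i ^ 3 = c (σ i) := by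
  have hplane (i j : Fin 5) (hij : i ≠ j) :
      ∃ a b, a ≠ b ∧ Submodule.span K {v a, v b} = Submodule.span K {w i, w j} := by
    obtain ⟨p, q, r, hpqr⟩ : ∃ p q r : Fin 5, ∀ k, k ≠ i → k ≠ j → k = p ∨ k = q ∨ k = r := by
      clear h hw
      decide +revert
    obtain ⟨x, hx, hp, hq, hr⟩ := exists_dual_ne_zero_of_three hV (w p) (w q) (w r)
    refine hv.exists_pair_span_eq hV hc h hx fun k hki hkj => ?_
    rcases hpqr k hki hkj with rfl | rfl | rfl <;> assumption
  have hplane_ne (i j k : Fin 5) (hij : i ≠ j) (hik : i ≠ k) (hjk : j ≠ k) :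
      Submodule.span K {w i, w j} ≠ Submodule.span K {w i, w k} := by
    intro heq
    obtain ⟨l, m, hlm⟩ : ∃ l m : Fin 5, ∀ n, n ≠ m → n = i ∨ n = j ∨ n = k ∨ n = l := by
      clear h hw hplane heq
      decide +revert
    obtain ⟨x, hx, hi, hj, hl⟩ := exists_dual_ne_zero_of_three hV (w i) (w j) (w l)
    have hk : x (w k) = 0 := by
      have hle : Submodule.span K {w i, w j} ≤ LinearMap.ker x := by
        rw [Submodule.span_le]
        rintro _ (rfl | rfl)
        exacts [hi, hj]
      exact hle (heq ▸ Submodule.subset_span (by simp))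
    obtain ⟨a, b, hab, hspan⟩ := hv.exists_pair_span_eq hV hc h hx (i := m) (j := m) (by
      intro n hn _
      rcases hlm n hn with rfl | rfl | rfl | rfl <;> assumption)
    exact hv.not_span_pair_le_span_singleton hab (w m) (by simp [hspan])
  have hprop (i : Fin 5) : ∃ k, ∃ t : K, w i = t • v k := by
    obtain ⟨j, k, hij, hik, hjk⟩ : ∃ j k : Fin 5, i ≠ j ∧ i ≠ k ∧ j ≠ k := by
      clear h hw hplane hplane_ne
      decide +revert
    obtain ⟨a, b, hab, hspan⟩ := hplane i j hij
    obtain ⟨d, e, -, hspan'⟩ := hplane i k hik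
    refine hv.exists_eq_smul_of_mem_span_pair hab (d := d) (e := e) ?_ ?_ ?_
    · rw [hspan, hspan']
      exact hplane_ne i j k hij hik hjk
    · rw [hspan]
      exact Submodule.subset_span (by simp)
    · rw [hspan']
      exact Submodule.subset_span (by simp)
  choose σ lam hlam using hprop
  have hσ : Function.Injective σ := by
    intro i j hij
    by_contra hne
    obtain ⟨a, b, hab, hspan⟩ := hplane i j hne
    refine hv.not_span_pair_le_span_singleton hab (v (σ i)) ?_
    rw [hspan, Submodule.span_le]
    rintro _ (rfl | rfl)
    · exact Submodule.mem_span_singleton.2 ⟨lam i, (hlam i).symm⟩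
    · exact Submodule.mem_span_singleton.2 ⟨lam j, by rw [hij, ← hlam j]⟩
  let τ : Equiv.Perm (Fin 5) := Equiv.ofBijective σ (Finite.injective_iff_bijective.1 hσ)
  refine ⟨τ, lam, fun i hi => hw i (by rw [hlam, hi, zero_smul]), hlam, fun i => ?_⟩
  have hsum (x y : Dual K V) :
      ∑ k, ((c k - c' (τ.symm k) * lam (τ.symm k) ^ 3) * (x (v k) * y (v k))) • v k = 0 := by
    rw [← Module.forall_dual_apply_eq_zero_iff K]
    intro z
    have h₁ := h x y z
    rw [← Equiv.sum_comp τ.symm fun i => c' i * (x (w i) * y (w i) * z (w i)), ← sub_eq_zero,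
      ← Finset.sum_sub_distrib] at h₁
    rw [map_sum, ← h₁]
    refine Finset.sum_congr rfl fun k _ => ?_
    have hk : σ (τ.symm k) = k := τ.apply_symm_apply k
    rw [hlam (τ.symm k), hk]
    simp only [map_smul, smul_eq_mul]
    ring
  obtain ⟨p, q, r, s, hpqr⟩ : ∃ p q r s : Fin 5,
      ∀ k, k ≠ τ i → k ≠ s → k = p ∨ k = q ∨ k = r := by
    generalize τ i = m
    revert m
    decide
  obtain ⟨x, hx, hp, hq, hr⟩ := exists_dual_ne_zero_of_three hV (v p) (v q) (v r)
  have hxi : x (v (τ i)) ≠ 0 := by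
    intro h0
    obtain ⟨j, hjs, hj⟩ := hv.exists_ne_apply_ne_zero hV hx s
    by_cases hji : j = τ i
    · exact hj (hji ▸ h0)
    · rcases hpqr j hji hjs with rfl | rfl | rfl <;> exact hj ‹_›
  have := congrFun (hv.eq_zero_of_sum_smul_eq_zero (i := p) (by simp [hp]) (hsum x x)) (τ i)
  simp only [Equiv.symm_apply_apply, Pi.zero_apply, mul_eq_zero, hxi, or_self, or_false] at this
  exact (sub_eq_zero.1 this).symm

end GeneralPosition

/-- A dominant polynomial map between affine spaces over an algebraically closed field: a general
point of the target is the image of a point of any prescribed principal open set. -/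
theorem AlgebraicIndependent.exists_ne_zero_forall_exists_eval_eq {K ι κ : Type*} [Field K]
    [IsAlgClosed K] [Finite ι] [Finite κ] {P : ι → MvPolynomial κ K}
    (hP : AlgebraicIndependent K P) {g : MvPolynomial κ K} (hg : g ≠ 0) :
    ∃ D : MvPolynomial ι K, D ≠ 0 ∧ ∀ y : ι → K, eval y D ≠ 0 →
      ∃ x : κ → K, (∀ i, eval x (P i) = y i) ∧ eval x g ≠ 0 := by
  let φ : MvPolynomial ι K →+* MvPolynomial κ K := (aeval P : MvPolynomial ι K →ₐ[K] _).toRingHom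
  have hφ : Function.Injective φ := hP
  have hφfin : φ.FinitePresentation := by
    refine RingHom.FinitePresentation.of_finiteType.1 ?_
    refine RingHom.FiniteType.of_comp_finiteType (f := C) ?_
    have : φ.comp C = algebraMap K (MvPolynomial κ K) := by
      ext; simp [φ, algebraMap_eq]
    rw [this, RingHom.finiteType_algebraMap]
    infer_instance
  have hcons := PrimeSpectrum.isConstructible_comap_image hφfin
    (PrimeSpectrum.isConstructible_basicOpen (f := g))
  obtain ⟨S, hS⟩ := PrimeSpectrum.exists_constructibleSetData_iff.2 hcons
  have hbot : (⊥ : PrimeSpectrum (MvPolynomial ι K)) ∈ S.toSet := by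
    rw [hS]
    refine ⟨⊥, by simpa using hg, ?_⟩
    ext p
    simp [PrimeSpectrum.asIdeal_bot, map_eq_zero_iff φ hφ]
  obtain ⟨B, hB, hmem⟩ := Set.mem_iUnion₂.1 hbot
  have hBg : ∀ i, B.g i = 0 := fun i => by
    simpa using hmem.1 (Set.mem_range_self i)
  have hBf : B.f ≠ 0 := by simpa using hmem.2
  refine ⟨B.f, hBf, fun y hy => ?_⟩
  have hy' : (⟨vanishingIdeal K {y}, inferInstance⟩ : PrimeSpectrum (MvPolynomial ι K)) ∈
      PrimeSpectrum.comap φ '' (PrimeSpectrum.basicOpen g : Set _) := by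
    rw [← hS]
    refine Set.mem_iUnion₂.2 ⟨B, hB, ?_, ?_⟩
    · rintro _ ⟨i, rfl⟩
      simp [hBg]
    · simpa [mem_vanishingIdeal_singleton_iff, aeval_eq_eval] using hy
  obtain ⟨q, hgq, hq⟩ := hy'
  obtain ⟨M, hqM, hM, hgM⟩ : ∃ M : Ideal (MvPolynomial κ K), q.asIdeal ≤ M ∧ M.IsMaximal ∧
      g ∉ M := by
    have hjac : q.asIdeal.jacobson = q.asIdeal :=
      IsJacobsonRing.out inferInstance q.isPrime.isRadical
    have : g ∉ q.asIdeal.jacobson := by rwa [hjac]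
    simpa [Ideal.jacobson, Submodule.mem_sInf] using this
  obtain ⟨x, rfl⟩ := isMaximal_iff_eq_vanishingIdeal_singleton.1 hM
  refine ⟨x, fun i => ?_, ?_⟩
  · have hi : X i - C (y i) ∈ (PrimeSpectrum.comap φ q).asIdeal := by
      rw [hq]
      simp
    have := hqM hi
    simpa [mem_vanishingIdeal_singleton_iff, φ, sub_eq_zero, aeval_eq_eval] using this
  · simpa [mem_vanishingIdeal_singleton_iff, aeval_eq_eval] using hgM

/-- The Jacobian criterion for algebraic independence. -/
theorem algebraicIndependent_of_surjective_fderiv {𝕜 ι κ : Type*} [RCLike 𝕜] [Fintype ι] [Fintype κ]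
    {P : ι → MvPolynomial κ 𝕜} (x : κ → 𝕜)
    (hx : Function.Surjective (fderiv 𝕜 (fun z : κ → 𝕜 => fun i => eval z (P i)) x)) :
    AlgebraicIndependent 𝕜 P := by
  rw [algebraicIndependent_iff]
  intro D hD
  have hstrict : HasStrictFDerivAt (fun z : κ → 𝕜 => fun i => eval z (P i))
      (fderiv 𝕜 (fun z : κ → 𝕜 => fun i => eval z (P i)) x) x := by
    have : AnalyticAt 𝕜 (fun z : κ → 𝕜 => fun i => eval z (P i)) x :=
      AnalyticAt.pi fun i => AnalyticOnNhd.eval_mvPolynomial (P i) x (Set.mem_univ x)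
    exact this.hasStrictFDerivAt
  have hopen := hstrict.map_nhds_eq_of_surj (LinearMap.range_eq_top.2 hx)
  have hrange : Set.range (fun z : κ → 𝕜 => fun i => eval z (P i)) ∈
      nhds (fun i => eval x (P i)) := by
    rw [← hopen]
    exact Filter.mem_map.2 (Filter.univ_mem' fun z => Set.mem_range_self z)
  rw [nhds_pi, Filter.mem_pi'] at hrange
  obtain ⟨I, t, ht, hsub⟩ := hrange
  refine funext_set t (fun i => infinite_of_mem_nhds _ (ht i)) fun y hy => ?_
  obtain ⟨z, rfl⟩ := hsub (Set.pi_mono' (fun i _ => subset_rfl) (Set.subset_univ _) hy)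
  have hz := congrArg (aeval z) hD
  rw [comp_aeval_apply, map_zero] at hz
  simpa [aeval_eq_eval] using hz

theorem linForm_add_smul {k : ℕ} (v u : Fin k → ℂ) (t : ℂ) :
    linForm k (v + t • u) = linForm k v + C t * linForm k u := by
  simp only [linForm, Pi.add_apply, Pi.smul_apply, smul_eq_mul, map_add, map_mul, add_mul,
    Finset.sum_add_distrib, Finset.mul_sum, mul_assoc]

theorem linForm_single {k : ℕ} (i : Fin k) : linForm k (Pi.single i 1) = X i := by
  simp [linForm, Pi.single_apply, apply_ite C]

theorem eval_linForm {k : ℕ} (v p : Fin k → ℂ) : eval p (linForm k v) = ∑ j, p j * v j := by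
  simp [linForm, mul_comm]

/-- The exponents of the monomials of degree three in four variables. -/
abbrev CubicExponent : Type := {μ : Fin 4 →₀ ℕ // (μ.sum fun _ e => e) = 3}

theorem exists_single_add_single_add_single (μ : CubicExponent) :
    ∃ a b c, μ.1 = Finsupp.single a 1 + Finsupp.single b 1 + Finsupp.single c 1 := by
  have hcard : μ.1.toMultiset.card = 3 := (Finsupp.card_toMultiset _).trans μ.2
  obtain ⟨a, b, c, h⟩ := Multiset.card_eq_three.1 hcard
  refine ⟨a, b, c, ?_⟩
  rw [← Finsupp.toMultiset_toFinsupp μ.1, h]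
  simp [Multiset.insert_eq_cons, ← Multiset.singleton_add, add_assoc]

instance : Finite CubicExponent := by
  refine Finite.of_surjective (fun p : Fin 4 × Fin 4 × Fin 4 =>
    (⟨Finsupp.single p.1 1 + Finsupp.single p.2.1 1 + Finsupp.single p.2.2 1, ?_⟩ :
      CubicExponent)) ?_
  · simp [Finsupp.sum_add_index']
  · intro μ
    obtain ⟨a, b, c, h⟩ := exists_single_add_single_add_single μ
    exact ⟨(a, b, c), Subtype.ext h.symm⟩

noncomputable instance : Fintype CubicExponent := Fintype.ofFinite _

/-- The coefficient of `x ^ μ` in `∑ i, ℓ_{v i} ^ 3`, as a polynomial in the coordinates of the five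
vectors `v i`. -/
noncomputable def cubeSumCoeff (μ : CubicExponent) : MvPolynomial (Fin 5 × Fin 4) ℂ :=
  ∑ i, C (μ.1.multinomial : ℂ) * μ.1.prod fun j m => X (i, j) ^ m

theorem coeff_linForm_cube (v : Fin 4 → ℂ) (μ : Fin 4 →₀ ℕ) :
    coeff μ (linForm 4 v ^ 3) =
      if (μ.sum fun _ m => m) = 3 then μ.multinomial * μ.prod (fun j m => v j ^ m) else 0 := by
  simpa [linForm, smul_eq_C_mul] using coeff_linearCombination_X_pow_of_fintype v μ 3

theorem eval_cubeSumCoeff (z : Fin 5 × Fin 4 → ℂ) (μ : CubicExponent) :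
    eval z (cubeSumCoeff μ) = coeff μ.1 (∑ i, linForm 4 (fun j => z (i, j)) ^ 3) := by
  simp [cubeSumCoeff, coeff_sum, coeff_linForm_cube, μ.2, Finsupp.prod]

theorem fderiv_cubeSumCoeff (z u : Fin 5 × Fin 4 → ℂ) :
    fderiv ℂ (fun z : Fin 5 × Fin 4 → ℂ => fun μ => eval z (cubeSumCoeff μ)) z u = fun μ =>
      coeff μ.1 (∑ i, 3 * (linForm 4 (fun j => z (i, j)) ^ 2 * linForm 4 (fun j => u (i, j)))) := by
  have hdiff : DifferentiableAt ℂ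
      (fun z : Fin 5 × Fin 4 → ℂ => fun μ => eval z (cubeSumCoeff μ)) z :=
    differentiableAt_pi.2 fun μ =>
      (AnalyticOnNhd.eval_mvPolynomial (cubeSumCoeff μ) z (Set.mem_univ z)).differentiableAt
  refine (hdiff.hasFDerivAt.hasLineDerivAt u).unique (hasDerivAt_pi.2 fun μ => ?_)
  set A := ∑ i, linForm 4 (fun j => z (i, j)) ^ 3 with hA
  set B := ∑ i, 3 * (linForm 4 (fun j => z (i, j)) ^ 2 * linForm 4 (fun j => u (i, j))) with hB
  set E := ∑ i, 3 * (linForm 4 (fun j => z (i, j)) * linForm 4 (fun j => u (i, j)) ^ 2) with hE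
  set G := ∑ i, linForm 4 (fun j => u (i, j)) ^ 3 with hG
  have hline (t : ℂ) : eval (z + t • u) (cubeSumCoeff μ) =
      coeff μ.1 A + t * coeff μ.1 B + t ^ 2 * coeff μ.1 E + t ^ 3 * coeff μ.1 G := by
    simp only [← coeff_C_mul, ← coeff_add]
    rw [eval_cubeSumCoeff, hA, hB, hE, hG]
    simp only [Finset.mul_sum, ← Finset.sum_add_distrib]
    refine congrArg (coeff μ.1) (Finset.sum_congr rfl fun i _ => ?_)
    have := linForm_add_smul (fun j => z (i, j)) (fun j => u (i, j)) t
    change linForm 4 ((fun j => z (i, j)) + t • fun j => u (i, j)) ^ 3 = _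
    rw [this, map_pow, map_pow]
    ring
  simp only [hline]
  have hid := hasDerivAt_id (0 : ℂ)
  have := (((hid.mul_const (coeff μ.1 B)).const_add (coeff μ.1 A)).add
    ((hid.pow 2).mul_const (coeff μ.1 E))).add ((hid.pow 3).mul_const (coeff μ.1 G))
  simpa using! this

/-- The four coordinate vectors and the all-ones vector. -/
noncomputable def standardPentahedron : Fin 5 → Fin 4 → ℂ :=
  Fin.snoc (fun i => Pi.single i 1) 1

theorem linForm_standardPentahedron_castSucc (i : Fin 4) :
    linForm 4 (standardPentahedron i.castSucc) = X i := by
  simp [standardPentahedron, linForm_single]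

theorem linForm_standardPentahedron_last :
    linForm 4 (standardPentahedron (Fin.last 4)) = ∑ i, X i := by
  rw [standardPentahedron, Fin.snoc_last]
  simp [linForm]

theorem mul_mul_mem_of_sq_mul_mem {R : Type*} [CommRing R] [Algebra ℂ R]
    (x : Fin 4 → R) (Q : Submodule ℂ R)
    (hQ : ∀ i j, x i ^ 2 * x j ∈ Q) (hS : ∀ j, (∑ i, x i) ^ 2 * x j ∈ Q) (a b c : Fin 4) :
    x a * x b * x c ∈ Q := by
  by_cases hab : a = b
  · subst hab
    simpa [sq] using hQ a c
  by_cases hac : a = c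
  · subst hac
    convert hQ a b using 1
    ring
  by_cases hbc : b = c
  · subst hbc
    convert hQ b a using 1
    ring
  obtain ⟨d, had, hbd, hcd, huniv⟩ :
      ∃ d : Fin 4, a ≠ d ∧ b ≠ d ∧ c ≠ d ∧ Finset.univ = {a, b, c, d} := by
    clear hQ hS x
    decide +revert
  have hsum : (∑ i, x i : R) = x a + (x b + (x c + x d)) := by
    rw [huniv, Finset.sum_insert (by simp [*]), Finset.sum_insert (by simp [*]),
      Finset.sum_insert (by simp [*]), Finset.sum_singleton]
  rw [hsum] at hS
  rw [← Q.smul_mem_iff (by norm_num : (6 : ℂ) ≠ 0)]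
  have hid : (6 : ℂ) • (x a * x b * x c : R) =
      (x a + (x b + (x c + x d))) ^ 2 * x a + (x a + (x b + (x c + x d))) ^ 2 * x b +
      (x a + (x b + (x c + x d))) ^ 2 * x c - (2 : ℂ) • ((x a + (x b + (x c + x d))) ^ 2 * x d) -
      (x a ^ 2 * x a + x b ^ 2 * x b + x c ^ 2 * x c) -
      (3 : ℂ) • (x a ^ 2 * x b + x a ^ 2 * x c + x b ^ 2 * x a + x b ^ 2 * x c +
        x c ^ 2 * x a + x c ^ 2 * x b) +
      (3 : ℂ) • (x d ^ 2 * x a + x d ^ 2 * x b + x d ^ 2 * x c) + (2 : ℂ) • (x d ^ 2 * x d) := by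
    simp only [Algebra.smul_def, map_ofNat]
    ring
  rw [hid]
  refine Q.add_mem (Q.add_mem (Q.sub_mem (Q.sub_mem (Q.sub_mem ?_ ?_) ?_) ?_) ?_) ?_
  · exact Q.add_mem (Q.add_mem (hS a) (hS b)) (hS c)
  · exact Q.smul_mem _ (hS d)
  · exact Q.add_mem (Q.add_mem (hQ a a) (hQ b b)) (hQ c c)
  · exact Q.smul_mem _ (Q.add_mem (Q.add_mem (Q.add_mem (Q.add_mem (Q.add_mem
      (hQ a b) (hQ a c)) (hQ b a)) (hQ b c)) (hQ c a)) (hQ c b))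
  · exact Q.smul_mem _ (Q.add_mem (Q.add_mem (hQ d a) (hQ d b)) (hQ d c))
  · exact Q.smul_mem _ (hQ d d)

theorem algebraicIndependent_cubeSumCoeff : AlgebraicIndependent ℂ cubeSumCoeff := by
  refine algebraicIndependent_of_surjective_fderiv (fun p => standardPentahedron p.1 p.2) ?_
  set L := fderiv ℂ (fun z : Fin 5 × Fin 4 → ℂ => fun μ => eval z (cubeSumCoeff μ))
    (fun p => standardPentahedron p.1 p.2)
  let κ : MvPolynomial (Fin 4) ℂ →ₗ[ℂ] CubicExponent → ℂ := LinearMap.pi fun μ => lcoeff ℂ μ.1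
  let Q : Submodule ℂ (MvPolynomial (Fin 4) ℂ) := (LinearMap.range L.toLinearMap).comap κ
  have hsq (i : Fin 5) (j : Fin 4) : linForm 4 (standardPentahedron i) ^ 2 * X j ∈ Q := by
    rw [← Q.smul_mem_iff (by norm_num : (3 : ℂ) ≠ 0)]
    refine ⟨fun p => (Pi.single i (Pi.single j 1) : Fin 5 → Fin 4 → ℂ) p.1 p.2, ?_⟩
    refine (fderiv_cubeSumCoeff _ _).trans ?_
    ext μ
    rw [Finset.sum_eq_single i]
    · have hC : (3 : MvPolynomial (Fin 4) ℂ) = C 3 := (map_ofNat C 3).symm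
      simp [κ, linForm_single, hC]
    · intro k _ hk
      simp [hk, linForm]
    · simp
  have hmem := mul_mul_mem_of_sq_mul_mem X Q
    (fun i j => linForm_standardPentahedron_castSucc i ▸ hsq i.castSucc j)
    (fun j => linForm_standardPentahedron_last ▸ hsq (Fin.last 4) j)
  rw [← ContinuousLinearMap.coe_coe, ← LinearMap.range_eq_top, eq_top_iff,
    ← (Pi.basisFun ℂ CubicExponent).span_eq, Submodule.span_le]
  rintro _ ⟨μ, rfl⟩
  obtain ⟨a, b, c, hμ⟩ := exists_single_add_single_add_single μ
  have hκ : κ (X a * X b * X c) = Pi.basisFun ℂ CubicExponent μ := by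
    have : (X a * X b * X c : MvPolynomial (Fin 4) ℂ) = monomial μ.1 1 := by
      simp [X, hμ, monomial_mul]
    ext ν
    simp [this, κ, Pi.single_apply, coeff_monomial, Subtype.ext_iff, eq_comm]
  rw [← hκ]
  exact hmem a b c

/-- The product of the five maximal minors of a `5 × 4` matrix of variables. -/
noncomputable def minorProduct : MvPolynomial (Fin 5 × Fin 4) ℂ :=
  ∏ i : Fin 5, (Matrix.of fun a b => X (i.succAbove a, b)).det

theorem eval_minorProduct (z : Fin 5 × Fin 4 → ℂ) :
    eval z minorProduct = ∏ i : Fin 5, (Matrix.of fun a b => z (i.succAbove a, b)).det := by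
  simp only [minorProduct, map_prod, RingHom.map_det]
  congr!
  ext
  simp

theorem minorProduct_ne_zero : minorProduct ≠ 0 := by
  intro h
  have := eval_minorProduct fun p => ((p.1 : ℕ) : ℂ) ^ (p.2 : ℕ)
  rw [h, map_zero, eq_comm, Finset.prod_eq_zero_iff] at this
  obtain ⟨i, -, hi⟩ := this
  refine Matrix.det_vandermonde_ne_zero_iff.2 (fun a b hab => ?_ : Function.Injective
    fun a : Fin 4 => ((i.succAbove a : ℕ) : ℂ)) hi
  exact Fin.succAbove_right_injective (Fin.ext (Nat.cast_injective hab))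

theorem polarize_linForm_cube_sum {v w : Fin 5 → Fin 4 → ℂ} {c c' : Fin 5 → ℂ}
    (h : ∑ i, c i • linForm 4 (v i) ^ 3 = ∑ i, c' i • linForm 4 (w i) ^ 3)
    (x y z : Module.Dual ℂ (Fin 4 → ℂ)) :
    ∑ i, c i * (x (v i) * y (v i) * z (v i)) = ∑ i, c' i * (x (w i) * y (w i) * z (w i)) := by
  have hcube (x : Module.Dual ℂ (Fin 4 → ℂ)) :
      ∑ i, c i * x (v i) ^ 3 = ∑ i, c' i * x (w i) ^ 3 := by
    have hx (u : Fin 4 → ℂ) : eval (fun j => x (Pi.single j 1)) (linForm 4 u) = x u := by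
      rw [eval_linForm, LinearMap.pi_apply_eq_sum_univ x u]
      refine Finset.sum_congr rfl fun j _ => ?_
      rw [smul_eq_mul, mul_comm]
      congr 2
      ext k
      simp [Pi.single_apply, eq_comm]
    simpa [smul_eval, hx] using congrArg (eval fun j => x (Pi.single j 1)) h
  have hpol (c : Fin 5 → ℂ) (v : Fin 5 → Fin 4 → ℂ) :
      6 * ∑ i, c i * (x (v i) * y (v i) * z (v i)) =
      ∑ i, c i * (x + y + z) (v i) ^ 3 - ∑ i, c i * (x + y) (v i) ^ 3 -
      ∑ i, c i * (x + z) (v i) ^ 3 - ∑ i, c i * (y + z) (v i) ^ 3 + ∑ i, c i * x (v i) ^ 3 +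
      ∑ i, c i * y (v i) ^ 3 + ∑ i, c i * z (v i) ^ 3 := by
    simp only [Finset.mul_sum, ← Finset.sum_add_distrib, ← Finset.sum_sub_distrib,
      LinearMap.add_apply]
    refine Finset.sum_congr rfl fun i _ => ?_
    ring
  refine mul_left_cancel₀ (by norm_num : (6 : ℂ) ≠ 0) ?_
  rw [hpol, hpol]
  simp only [hcube]

/-- **Sylvester Pentahedral Theorem**: a general homogeneous cubic
`f ∈ ℂ[x_0,x_1,x_2,x_3]` (off the zero locus of some nonzero polynomial in its 20
coefficients) is a sum `f = Σ_{i=1}^5 c_i ℓ_{v_i}³` of five cubes of linear forms, and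
this decomposition is unique up to permutation and scaling. -/
theorem statement19 :
    ∃ D : MvPolynomial {μ : Fin 4 →₀ ℕ // (μ.sum fun _ e => e) = 3} ℂ, D ≠ 0 ∧
      ∀ f : MvPolynomial (Fin 4) ℂ, f.IsHomogeneous 3 →
        MvPolynomial.eval (fun μ => MvPolynomial.coeff μ.1 f) D ≠ 0 →
        ∃ (v : Fin 5 → Fin 4 → ℂ) (c : Fin 5 → ℂ),
          (∀ i, v i ≠ 0) ∧
          f = ∑ i, c i • (linForm 4 (v i)) ^ 3 ∧
          ∀ (c' : Fin 5 → ℂ) (w : Fin 5 → Fin 4 → ℂ),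
            (∀ i, c' i ≠ 0) → (∀ i, w i ≠ 0) →
            f = ∑ i, c' i • (linForm 4 (w i)) ^ 3 →
            ∃ (σ : Equiv.Perm (Fin 5)) (lam : Fin 5 → ℂ),
              (∀ i, lam i ≠ 0) ∧ (∀ i, w i = lam i • v (σ i)) ∧
              (∀ i, c' i * lam i ^ 3 = c (σ i)) := by
  obtain ⟨D, hD, hgen⟩ := algebraicIndependent_cubeSumCoeff.exists_ne_zero_forall_exists_eval_eq
    minorProduct_ne_zero
  refine ⟨D, hD, fun f hf hfD => ?_⟩
  obtain ⟨z, hz, hminor⟩ := hgen _ hfD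
  rw [eval_minorProduct, Finset.prod_ne_zero_iff] at hminor
  have hpos : InGeneralPosition ℂ fun i j => z (i, j) := fun i =>
    Matrix.linearIndependent_rows_of_det_ne_zero (hminor i (Finset.mem_univ i))
  have hfz : f = ∑ i, (1 : ℂ) • linForm 4 (fun j => z (i, j)) ^ 3 := by
    simp only [one_smul]
    ext μ
    by_cases hμ : (μ.sum fun _ e => e) = 3
    · rw [← hz ⟨μ, hμ⟩, eval_cubeSumCoeff]
    · rw [hf.coeff_eq_zero hμ]
      simp [coeff_sum, coeff_linForm_cube, hμ]
  refine ⟨fun i j => z (i, j), fun _ => 1, fun i => ?_, hfz, fun c' w _ hw hfw => ?_⟩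
  · obtain ⟨k, hk⟩ := exists_ne i
    obtain ⟨a, rfl⟩ := Fin.exists_succAbove_eq hk.symm
    exact (hpos k).ne_zero a
  · exact hpos.exists_perm_of_sum_cube_eq (by simp) (fun _ => one_ne_zero) hw
      (polarize_linForm_cube_sum (hfz.symm.trans hfw))
end
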